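/- Let q be a prime power and let x_1,…,x_n be nonnegative reals. The characteristic polynomial of the transition matrix of T_{G/B}(q,x) on ℂ[G/B] equals (t − λ_{[n]}(q,x)) · ∏_{S ⊊ {1,…,n}} (t − λ_S(q,x))^{m(S)}, where for S = {i_1 > i_2 > ⋯ > i_k} one sets λ_S(q,x) = ∑_{j=1}^k x_{i_j}/q^{n−i_j−j+1} (with λ_∅ = 0) and m(S) = d_{n−k}(q)·q^{(n−i_1)+(n−1−i_2)+⋯+(n−k+1−i_k)}, with d_m(q) = [m]_q!·∑_{r=0}^m (−1)^r q^{r(r−1)/2}/[r]_q! the q-derangement numbers. In particular λ_S(q,x) occurs as an eigenvalue with algebraic multiplicity m(S) for S ⊊ {1,…,n} and with multiplicity 1 for S = {1,…,n}. Moreover T_{G/B}(q,x) is diagonalizable. -/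

import Mathlib

open scoped Classical
set_option linter.unusedSectionVars false
set_option synthInstance.maxHeartbeats 1000000
set_option maxHeartbeats 1000000

noncomputable section

namespace QTsetlin

/-- `M` is upper triangular. -/
def upperTri {F : Type} [Field F] {n : ℕ} (M : Matrix (Fin n) (Fin n) F) : Prop :=
  ∀ i j : Fin n, j < i → M i j = 0

/-- `M` is lower triangular. -/
def lowerTri {F : Type} [Field F] {n : ℕ} (M : Matrix (Fin n) (Fin n) F) : Prop :=
  ∀ i j : Fin n, i < j → M i j = 0

variable (F : Type) [Field F] [Fintype F] [DecidableEq F] (n : ℕ)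

/-- The general linear group `G = GL_n(F_q)`. -/
abbrev GLn := GL (Fin n) F

/-- The Borel subgroup `B` of invertible upper triangular matrices. -/
def Bsub : Subgroup (GLn F n) where
  carrier := {g | upperTri (g : Matrix (Fin n) (Fin n) F)}
  one_mem' := by
    intro i j hij
    simp [Matrix.one_apply, (Fin.ne_of_lt hij).symm]
  mul_mem' := by
    intro a b ha hb i j hij
    exact Matrix.BlockTriangular.mul ha hb hij
  inv_mem' := by
    intro a ha
    have hdet : IsUnit ((a : Matrix (Fin n) (Fin n) F).det) :=
      (Matrix.isUnit_iff_isUnit_det _).mp a.isUnit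
    have hinv : Invertible (a : Matrix (Fin n) (Fin n) F) :=
      Matrix.invertibleOfIsUnitDet _ hdet
    have h2 : ((a : Matrix (Fin n) (Fin n) F)⁻¹).BlockTriangular (id : Fin n → Fin n) :=
      Matrix.blockTriangular_inv_of_blockTriangular ha
    show upperTri ((a⁻¹ : GLn F n) : Matrix (Fin n) (Fin n) F)
    rw [show ((a⁻¹ : GLn F n) : Matrix (Fin n) (Fin n) F)
        = (a : Matrix (Fin n) (Fin n) F)⁻¹ from Matrix.coe_units_inv a]
    exact h2

/-- The set of cosets `G/B`. -/
abbrev Cosets := GLn F n ⧸ Bsub F n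

/-- permutation matrix of `π`: entry 1 in positions `(π j, j)`. -/
def permMat (π : Equiv.Perm (Fin n)) : Matrix (Fin n) (Fin n) F :=
  fun i j => if π j = i then 1 else 0

lemma permMat_mul (π σ : Equiv.Perm (Fin n)) :
    permMat F n π * permMat F n σ = permMat F n (π * σ) := by
  ext i j
  rw [Matrix.mul_apply]
  simp only [permMat, mul_ite, ite_mul, one_mul, mul_one, mul_zero, zero_mul]
  rw [Finset.sum_eq_single (σ j)]
  · simp only [Equiv.Perm.mul_apply]
    split_ifs <;> simp_all
  · intro k _ hk
    simp [hk.symm]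
  · simp

lemma permMat_one : permMat F n 1 = 1 := by
  ext i j
  simp [permMat, Matrix.one_apply, eq_comm]

/-- The permutation matrix of `π`, as an element of `GL_n(F)`. -/
def permGL (π : Equiv.Perm (Fin n)) : GLn F n :=
  ⟨permMat F n π, permMat F n π⁻¹,
    by rw [permMat_mul, mul_inv_cancel, permMat_one],
    by rw [permMat_mul, inv_mul_cancel, permMat_one]⟩

/-- `f_i(t)`: identity matrix with an extra entry `t` in position `(r, c)`, as an
element of `GL_n(F)`. -/
def transvGL (r c : Fin n) (h : r ≠ c) (t : F) : GLn F n :=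
  ⟨Matrix.transvection r c t, Matrix.transvection r c (-t),
    by rw [Matrix.transvection_mul_transvection_same _ _ h, add_neg_cancel,
      Matrix.transvection_zero],
    by rw [Matrix.transvection_mul_transvection_same _ _ h, neg_add_cancel,
      Matrix.transvection_zero]⟩

variable (K : Type) [Field K]

/-- Matrix (row convention: row `gB` is `(gB) · T_{k+1}`) of the Hecke generator `T_{k+1}`
(paper indexing) on `ℂ[G/B]`:
`(gB)·T_i = g s_i B + ∑_{t ≠ 0} g f_i(t) B`, where `s_i` swaps (0-based) positions `k, k+1`
and `f_i(t)` has an extra entry `t` in (0-based) position `(k+1, k)`. -/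
def genGB (k : ℕ) : Matrix (Cosets F n) (Cosets F n) K := fun C D =>
  if h : k + 1 < n then
    (if (QuotientGroup.mk (C.out * permGL F n
          (Equiv.swap ⟨k, Nat.lt_of_succ_lt h⟩ ⟨k + 1, h⟩)) : Cosets F n) = D then 1 else 0)
    + ((Finset.univ.filter fun t : F => t ≠ 0 ∧
        (QuotientGroup.mk (C.out * transvGL F n ⟨k + 1, h⟩ ⟨k, Nat.lt_of_succ_lt h⟩
          (fun hc => by simp [Fin.ext_iff] at hc) t) : Cosets F n) = D).card : K)
  else 0

/-- Matrix of the product `T_k T_{k-1} ⋯ T_1` (paper indexing) on `ℂ[G/B]`. -/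
def prodGenGB : ℕ → Matrix (Cosets F n) (Cosets F n) K
  | 0 => 1
  | k + 1 => genGB F n K k * prodGenGB k

/-- The (0-based) row index of the leading entry (the pivot `1` of the distinguished coset
representative) in the first column of a representative of the coset `C`. -/
def pivotRow (C : Cosets F n) : ℕ :=
  sInf {i : ℕ | ∃ h : i < n,
    ((C.out : GLn F n) : Matrix (Fin n) (Fin n) F) ⟨i, h⟩
      ⟨0, Nat.lt_of_le_of_lt (Nat.zero_le i) h⟩ ≠ 0}

/-- Matrix of the weighting operator `X_{G/B}(q,x)`, where `q` is the cardinality of the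
field: `gB ↦ (x_i / q^{n-i}) gB` with `i` the row index of the leading 1 in the first
column of the distinguished representative of `gB`. -/
def XGB (x : Fin n → K) : Matrix (Cosets F n) (Cosets F n) K := fun C D =>
  if D = C then
    (if h : pivotRow F n C < n then
      x ⟨pivotRow F n C, h⟩ / (Fintype.card F : K) ^ (n - 1 - pivotRow F n C)
    else 0)
  else 0

/-- Matrix of the q-Tsetlin library operator
`T_{G/B}(q,x) = (∑_{i=1}^n T_{i-1} ⋯ T_1) ∘ X_{G/B}(q,x)` on `ℂ[G/B]` (row convention). -/
def TGB (x : Fin n → K) : Matrix (Cosets F n) (Cosets F n) K :=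
  (∑ k ∈ Finset.range n, prodGenGB F n K k) * XGB F n K x

/-- The coset `gB` belongs to the double coset `[π] = B⁻ π B`. -/
def inDC (π : Equiv.Perm (Fin n)) (C : Cosets F n) : Prop :=
  ∃ l b : GLn F n, lowerTri (l : Matrix (Fin n) (Fin n) F) ∧
    upperTri (b : Matrix (Fin n) (Fin n) F) ∧
    C = QuotientGroup.mk (l * permGL F n π * b)

/-- The eigenvalue `λ_S(q,x) = ∑_{j=1}^k x_{i_j} / q^{n - i_j - j + 1}` attached to a subset
`S = {i_1 > i_2 > ⋯ > i_k}` of `{1,…,n}`; for `i ∈ S`, its 1-based rank `j` in the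
decreasing order is the number of elements of `S` that are `≥ i`. -/
def lambdaS (n : ℕ) (q : K) (x : Fin n → K) (S : Finset (Fin n)) : K :=
  ∑ i ∈ S, x i /
    q ^ ((n : ℤ) - ((i : ℕ) + 1) - ((S.filter fun t => i ≤ t).card : ℤ) + 1)

/-- The q-derangement number
`d_a(q) = [a]_q! ∑_{r=0}^a (-1)^r q^{r(r-1)/2} / [r]_q!`, written as the integer
`∑_{r=0}^a (-1)^r q^{\binom r 2} ∏_{t=r+1}^a [t]_q`. -/
def qDerangeNum (q : ℕ) (a : ℕ) : ℤ :=
  ∑ r ∈ Finset.range (a + 1),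
    (-1) ^ r * (q : ℤ) ^ (r * (r - 1) / 2) *
      ∏ t ∈ Finset.Icc (r + 1) a, (∑ s ∈ Finset.range t, (q : ℤ) ^ s)

/-- The multiplicity `m(S) = d_{n-k}(q) ⋅ q^{(n-i_1) + (n-1-i_2) + ⋯ + (n-k+1-i_k)}` of the
eigenvalue `λ_S(q,x)` for a proper subset `S = {i_1 > ⋯ > i_k} ⊊ {1,…,n}`; the summand for
the element of 1-based rank `j` is `n - j + 1 - i_j`. -/
def multGB (q n : ℕ) (S : Finset (Fin n)) : ℕ :=
  (qDerangeNum q (n - S.card)).toNat *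
    q ^ (∑ i ∈ S, (n - ((i : ℕ) + 1) - ((S.filter fun t => i ≤ t).card - 1)))
set_option linter.unusedSimpArgs false
set_option linter.unusedVariables false

section PartA
open Polynomial

lemma diag_of_annihilated {ι : Type*} [Fintype ι] [DecidableEq ι] (T : Matrix ι ι ℂ)
    (s : Finset ℂ) (h : aeval T (∏ a ∈ s, (X - C a)) = 0) :
    ∃ (P : Matrix ι ι ℂ) (d : ι → ℂ), IsUnit P.det ∧ T = P * Matrix.diagonal d * P⁻¹ := by
  set f : Module.End ℂ (ι → ℂ) := Matrix.toLin' T with hf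
  have hsq : Squarefree (∏ a ∈ s, (X - C a) : ℂ[X]) := by
    apply Polynomial.Separable.squarefree
    exact Polynomial.separable_prod_X_sub_C_iff'.mpr (fun _ _ _ _ h => h)
  have hann : aeval f (∏ a ∈ s, (X - C a)) = 0 := by
    have := congrArg (Matrix.toLinAlgEquiv' (R := ℂ) (n := ι)) h
    rw [map_zero] at this
    rw [← this]
    exact (Polynomial.aeval_algHom_apply (Matrix.toLinAlgEquiv' (R := ℂ) (n := ι)).toAlgHom T _)
  have hss : f.IsSemisimple := Module.End.isSemisimple_of_squarefree_aeval_eq_zero hsq hann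
  have htop : ⨆ μ, f.eigenspace μ = ⊤ := hss.iSup_eigenspace_eq_top
  have hinternal : DirectSum.IsInternal f.eigenspace := by
    rw [DirectSum.isInternal_submodule_iff_iSupIndep_and_iSup_eq_top]
    exact ⟨f.eigenspaces_iSupIndep, htop⟩
  let b := hinternal.collectedBasis (fun μ => Module.finBasis ℂ (f.eigenspace μ))
  have hb : ∀ a, f (b a) = a.1 • b a := by
    intro a
    have := hinternal.collectedBasis_mem (fun μ => Module.finBasis ℂ (f.eigenspace μ)) a
    exact Module.End.mem_eigenspace_iff.mp this
  have hfin : Finite (Σ μ : ℂ, Fin (Module.finrank ℂ (f.eigenspace μ))) :=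
    Module.Finite.finite_basis b
  letI := Fintype.ofFinite (Σ μ : ℂ, Fin (Module.finrank ℂ (f.eigenspace μ)))
  have hcard : Fintype.card (Σ μ : ℂ, Fin (Module.finrank ℂ (f.eigenspace μ))) = Fintype.card ι := by
    rw [← Module.finrank_eq_card_basis b, Module.finrank_fintype_fun_eq_card]
  let e := Fintype.equivOfCardEq hcard
  let c := b.reindex e
  let P : Matrix ι ι ℂ := Matrix.of fun i j => c j i
  have hP : P = (Pi.basisFun ℂ ι).toMatrix c := by
    ext i j; simp [P, Module.Basis.toMatrix_apply]
  have hdet : IsUnit P.det := by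
    rw [hP, ← Module.Basis.det_apply]
    exact (Pi.basisFun ℂ ι).isUnit_det c
  refine ⟨P, fun i => (e.symm i).1, hdet, ?_⟩
  have key : T * P = P * Matrix.diagonal (fun i => (e.symm i).1) := by
    ext i j
    have h1 : f (c j) = (e.symm j).1 • c j := by
      simp only [c, Module.Basis.reindex_apply]; exact hb _
    have h2 := congrFun h1 i
    rw [Matrix.mul_diagonal]
    simp only [hf, Matrix.toLin'_apply, Pi.smul_apply, smul_eq_mul] at h2
    rw [Matrix.mul_apply]
    simp only [P, Matrix.of_apply]
    rw [mul_comm, ← h2]; rfl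
  rw [← key, Matrix.mul_assoc, Matrix.mul_nonsing_inv _ hdet, Matrix.mul_one]

lemma charpoly_of_traces {ι : Type*} [Fintype ι] [DecidableEq ι] (T P : Matrix ι ι ℂ)
    (d : ι → ℂ) (hP : IsUnit P.det) (hT : T = P * Matrix.diagonal d * P⁻¹)
    {κ : Type*} [Fintype κ] (m : κ → ℕ) (lam : κ → ℂ)
    (htr : ∀ k : ℕ, Matrix.trace (T ^ k) = ∑ y, (m y : ℂ) * lam y ^ k) :
    T.charpoly = ∏ y, (X - C (lam y)) ^ m y := by
  let u : (Matrix ι ι ℂ)ˣ := Matrix.nonsingInvUnit P hP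
  have hu : (T : Matrix ι ι ℂ) = u.val * Matrix.diagonal d * (u⁻¹).val := by
    rw [hT]; rfl
  have hpow : ∀ k : ℕ, Matrix.trace (T ^ k) = ∑ i, d i ^ k := by
    intro k
    have : T ^ k = u.val * Matrix.diagonal d ^ k * (u⁻¹).val := by
      rw [hu, Units.conj_pow]
    rw [this, Matrix.trace_units_conj, Matrix.diagonal_pow, Matrix.trace_diagonal]
    rfl
  have hpoly : ∀ p : ℂ[X], ∑ i, p.eval (d i) = ∑ y, (m y : ℂ) * p.eval (lam y) := by
    intro p
    induction p using Polynomial.induction_on' with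
    | add p q hp hq => simp [Finset.sum_add_distrib, mul_add, hp, hq]
    | monomial k a =>
      simp only [eval_monomial]
      rw [← Finset.mul_sum, ← hpow, htr, Finset.mul_sum]
      exact Finset.sum_congr rfl fun y _ => by ring
  let s : Finset ℂ := Finset.univ.image d ∪ Finset.univ.image lam
  have hcount : ∀ a ∈ s, (Finset.univ.filter fun i => d i = a).card
      = ∑ y ∈ Finset.univ.filter (fun y => lam y = a), m y := by
    intro a ha
    let p := Lagrange.interpolate s id (fun b => if b = a then (1:ℂ) else 0)
    have hp : ∀ b ∈ s, p.eval b = if b = a then 1 else 0 := fun b hb =>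
      Lagrange.eval_interpolate_at_node _ (Function.injective_id.injOn) hb
    have h := hpoly p
    have e1 : ∀ i, p.eval (d i) = if d i = a then 1 else 0 := fun i => hp _ (by simp [s])
    have e2 : ∀ i, p.eval (lam i) = if lam i = a then 1 else 0 := fun i => hp _ (by simp [s])
    simp only [e1, e2] at h
    simp only [mul_ite, mul_one, mul_zero] at h
    rw [← Finset.sum_filter, ← Finset.sum_filter] at h
    simp only [Finset.sum_const, nsmul_eq_mul, mul_one] at h
    exact_mod_cast h
  rw [hT, show P * Matrix.diagonal d * P⁻¹ = u.val * Matrix.diagonal d * (u.val)⁻¹ from rfl,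
    Matrix.charpoly_units_conj, Matrix.charpoly_diagonal]
  rw [← Finset.prod_fiberwise_of_maps_to (s := Finset.univ) (t := s) (g := d) (by simp [s]),
    ← Finset.prod_fiberwise_of_maps_to (s := Finset.univ) (t := s) (g := lam) (by simp [s])]
  refine Finset.prod_congr rfl fun a ha => ?_
  rw [Finset.prod_congr rfl (g := fun _ => X - C a) (fun i hi => by
      rw [(Finset.mem_filter.mp hi).2]),
    Finset.prod_congr (s₂ := Finset.univ.filter (fun y => lam y = a)) rfl
      (g := fun y => (X - C a) ^ m y) (fun i hi => by rw [(Finset.mem_filter.mp hi).2])]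
  rw [Finset.prod_const, Finset.prod_pow_eq_pow_sum, hcount a ha]

end PartA

section PartB

/-- The `q`-number `[m]_q`. -/
def qn (q : ℕ) (m : ℕ) : ℤ := ∑ s ∈ Finset.range m, (q : ℤ) ^ s

/-- `Bq q m z` is the sum of `z (codim Y)` over subspaces `Y` of an `m`-dimensional space. -/
def Bq (q : ℕ) : ℕ → (ℕ → ℤ) → ℤ
  | 0, z => z 0
  | m + 1, z => Bq q m (fun k => (q : ℤ) ^ k * z k) + Bq q m (fun k => z (k + 1))

lemma Bq_add (q m : ℕ) (y z : ℕ → ℤ) : Bq q m (fun k => y k + z k) = Bq q m y + Bq q m z := by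
  induction m generalizing y z with
  | zero => rfl
  | succ m ih => simp only [Bq, mul_add, ih]; ring

lemma Bq_smul (q m : ℕ) (a : ℤ) (z : ℕ → ℤ) : Bq q m (fun k => a * z k) = a * Bq q m z := by
  induction m generalizing z with
  | zero => rfl
  | succ m ih => simp only [Bq, mul_left_comm _ a, ih]; ring

lemma qn_succ (q m : ℕ) : qn q (m + 1) = 1 + q * qn q m := by
  unfold qn
  rw [Finset.sum_range_succ', Finset.mul_sum]
  simp only [pow_succ, pow_zero]
  rw [add_comm]; congr 1
  exact Finset.sum_congr rfl fun _ _ => by ring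

lemma qn_zero (q : ℕ) : qn q 0 = 0 := by simp [qn]

lemma Bq_shift (q m : ℕ) (z : ℕ → ℤ) :
    Bq q (m + 1) (fun k => qn q k * z (k - 1)) = qn q (m + 1) * Bq q m z := by
  induction m generalizing z with
  | zero => simp [Bq, qn]
  | succ m ih =>
    rw [Bq]
    have h1 : Bq q (m + 1) (fun k => (q : ℤ) ^ k * (qn q k * z (k - 1)))
        = qn q (m + 1) * (q * Bq q m (fun k => (q : ℤ) ^ k * z k)) := by
      rw [← Bq_smul, ← ih]
      congr 1; funext k
      rcases k with _ | k
      · simp [qn_zero]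
      · simp only [Nat.add_sub_cancel, pow_succ]; ring
    have h2 : Bq q (m + 1) (fun k => qn q (k + 1) * z (k + 1 - 1))
        = Bq q (m + 1) z + q * (qn q (m + 1) * Bq q m (fun k => z (k + 1))) := by
      rw [← ih, ← Bq_smul, ← Bq_add]
      congr 1; funext k
      rcases k with _ | k
      · simp [qn_zero, qn_succ]
      · simp only [Nat.add_sub_cancel, qn_succ]; ring
    rw [h1, h2, qn_succ q (m + 1), Bq]; ring

lemma tri_succ (k : ℕ) : (k + 1) * (k + 1 - 1) / 2 = k * (k - 1) / 2 + k := by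
  rw [← Finset.sum_range_id, ← Finset.sum_range_id, Finset.sum_range_succ]

lemma Bq_sign (q m : ℕ) :
    Bq q (m + 1) (fun k => (-1) ^ k * (q : ℤ) ^ (k * (k - 1) / 2)) = 0 := by
  rw [Bq, ← Bq_add]
  have : (fun k => (q : ℤ) ^ k * ((-1) ^ k * (q : ℤ) ^ (k * (k - 1) / 2))
      + (-1) ^ (k + 1) * (q : ℤ) ^ ((k + 1) * (k + 1 - 1) / 2)) = fun k => 0 * (0 : ℤ) := by
    funext k
    rw [tri_succ, pow_add, pow_succ]; ring
  rw [this, Bq_smul]; simp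

lemma qD_zero (q : ℕ) : qDerangeNum q 0 = 1 := by simp [qDerangeNum]

lemma qD_succ (q m : ℕ) : qDerangeNum q (m + 1) =
    qn q (m + 1) * qDerangeNum q m + (-1) ^ (m + 1) * (q : ℤ) ^ ((m + 1) * (m + 1 - 1) / 2) := by
  unfold qDerangeNum
  rw [Finset.sum_range_succ]
  congr 1
  · rw [Finset.mul_sum]
    refine Finset.sum_congr rfl fun r hr => ?_
    have hr' : r + 1 ≤ m + 1 := by have := Finset.mem_range.mp hr; omega
    rw [Finset.prod_Icc_succ_top hr']
    unfold qn; ring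
  · simp

lemma Bq_derange (q m : ℕ) :
    Bq q (m + 1) (qDerangeNum q) = qn q (m + 1) * Bq q m (qDerangeNum q) := by
  have key : qDerangeNum q = fun k => qn q k * qDerangeNum q (k - 1)
      + (-1) ^ k * (q : ℤ) ^ (k * (k - 1) / 2) := by
    funext k
    rcases k with _ | k
    · simp [qD_zero, qn_zero]
    · rw [qD_succ]; simp only [Nat.add_sub_cancel]
  conv_lhs => rw [key]
  rw [Bq_add, Bq_shift, Bq_sign, add_zero]

lemma qn_nonneg (q m : ℕ) : 0 ≤ qn q m := Finset.sum_nonneg fun _ _ => by positivity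

lemma qD_nonneg_aux (q : ℕ) (m : ℕ) : 0 ≤ qDerangeNum q m ∧ 0 ≤ qDerangeNum q (m + 1) := by
  induction m with
  | zero => 
    refine ⟨by simp [qD_zero], ?_⟩
    rw [qD_succ, qD_zero]; simp [qn]
  | succ m ih =>
    refine ⟨ih.2, ?_⟩
    rcases Nat.even_or_odd m with hm | hm
    · have h0 := ih.1
      have h1 := ih.2
      rw [qD_succ]
      have e1 : ((-1 : ℤ)) ^ (m + 1 + 1) = 1 := by
        apply Even.neg_one_pow; exact (hm.add_one).add_one
      rw [e1]
      have := qn_nonneg q (m + 1 + 1)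
      positivity
    · rw [qD_succ, qD_succ q m]
      have e1 : ((-1 : ℤ)) ^ (m + 1 + 1) = -1 := by
        apply Odd.neg_one_pow; exact (hm.add_one).add_one
      have e2 : ((-1 : ℤ)) ^ (m + 1) = 1 := by
        apply Even.neg_one_pow; exact (hm.add_one)
      rw [e1, e2, tri_succ (m + 1), pow_add]
      have a1 := qn_nonneg q (m + 1)
      have a2 := qn_nonneg q (m + 1 + 1)
      have a3 := ih.1
      have a4 : (q : ℤ) ^ (m + 1) ≤ qn q (m + 1 + 1) := by
        unfold qn
        exact Finset.single_le_sum (f := fun s => (q : ℤ) ^ s) (fun _ _ => by positivity)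
          (Finset.mem_range.mpr (Nat.lt_succ_self _))
      have a5 : (0 : ℤ) ≤ (q : ℤ) ^ ((m + 1) * (m + 1 - 1) / 2) := by positivity
      have a6 : 0 ≤ qn q (m + 1 + 1) * (qn q (m + 1) * qDerangeNum q m) := by positivity
      nlinarith [mul_le_mul_of_nonneg_right a4 a5]

lemma qD_nonneg (q m : ℕ) : 0 ≤ qDerangeNum q m := (qD_nonneg_aux q m).1

lemma qn_mul (q m : ℕ) : ((q : ℤ) - 1) * qn q m = (q : ℤ) ^ m - 1 := by
  unfold qn; rw [mul_comm]; exact geom_sum_mul _ _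

end PartB

section PartC
variable {F : Type} [Field F] [Fintype F]

instance subFinite {V : Type*} [AddCommGroup V] [Module F V] [Finite V] :
    Finite (Submodule F V) :=
  Finite.of_injective (fun Y => (Y : Set V)) SetLike.coe_injective

instance subFintype {V : Type*} [AddCommGroup V] [Module F V] [Finite V] :
    Fintype (Submodule F V) := Fintype.ofFinite _

instance quotFintype {V : Type*} [AddCommGroup V] [Module F V] [Finite V] (Y : Submodule F V) :
    Fintype (V ⧸ Y) :=
  @Fintype.ofFinite _ (Finite.of_surjective _ Y.mkQ_surjective)

/-- The linear map deleting the first coordinate. -/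
def tailL (F : Type) [Field F] (n : ℕ) : (Fin (n + 1) → F) →ₗ[F] (Fin n → F) :=
  LinearMap.funLeft F F Fin.succ

lemma tailL_apply {n : ℕ} (w : Fin (n + 1) → F) : tailL F n w = fun i => w i.succ := rfl

lemma tailL_cons {n : ℕ} (a : F) (u : Fin n → F) :
    tailL F n (Fin.cons a u : Fin (n + 1) → F) = u := by
  funext i; simp [tailL_apply]

/-- Subspaces with vanishing first coordinate. -/
def inlS {n : ℕ} (Y : Submodule F (Fin n → F)) : Submodule F (Fin (n + 1) → F) :=
  Y.comap (tailL F n) ⊓ LinearMap.ker (LinearMap.proj (R := F) (φ := fun _ : Fin (n + 1) => F) 0)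

/-- Subspaces with nonvanishing first coordinate. -/
def inrS {n : ℕ} (Y : Submodule F (Fin n → F)) (c : (Fin n → F) ⧸ Y) :
    Submodule F (Fin (n + 1) → F) :=
  LinearMap.ker (Y.mkQ.comp (tailL F n) -
    (LinearMap.proj (R := F) (φ := fun _ : Fin (n + 1) => F) 0).smulRight c)

lemma mem_inlS {n : ℕ} (Y : Submodule F (Fin n → F)) (a : F) (u : Fin n → F) :
    (Fin.cons a u : Fin (n + 1) → F) ∈ inlS Y ↔ a = 0 ∧ u ∈ Y := by
  simp [inlS, tailL_cons, and_comm]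

lemma mem_inrS {n : ℕ} (Y : Submodule F (Fin n → F)) (c : (Fin n → F) ⧸ Y) (a : F)
    (u : Fin n → F) :
    (Fin.cons a u : Fin (n + 1) → F) ∈ inrS Y c ↔ Y.mkQ u = a • c := by
  simp [inrS, tailL_cons, sub_eq_zero]

lemma sub_ext_cons {n : ℕ} {Y Z : Submodule F (Fin (n + 1) → F)}
    (h : ∀ (a : F) (u : Fin n → F), (Fin.cons a u : Fin (n + 1) → F) ∈ Y ↔
      (Fin.cons a u : Fin (n + 1) → F) ∈ Z) : Y = Z := by
  ext w
  rw [← Fin.cons_self_tail w]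
  exact h _ _

/-- Gluing map for subspaces of `F^(n+1)`. -/
def decomp (n : ℕ) : (Submodule F (Fin n → F)) ⊕
    (Σ Y : Submodule F (Fin n → F), (Fin n → F) ⧸ Y) → Submodule F (Fin (n + 1) → F)
  | Sum.inl Y => inlS Y
  | Sum.inr p => inrS p.1 p.2

lemma exists_inrS {n : ℕ} (Y : Submodule F (Fin n → F)) (c : (Fin n → F) ⧸ Y) :
    ∃ u : Fin n → F, (Fin.cons 1 u : Fin (n + 1) → F) ∈ inrS Y c := by
  obtain ⟨u, hu⟩ := Y.mkQ_surjective c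
  exact ⟨u, by rw [mem_inrS, hu, one_smul]⟩

lemma mem_inrS_zero {n : ℕ} (Y : Submodule F (Fin n → F)) (c : (Fin n → F) ⧸ Y)
    (u : Fin n → F) : (Fin.cons 0 u : Fin (n + 1) → F) ∈ inrS Y c ↔ u ∈ Y := by
  rw [mem_inrS, zero_smul, Submodule.mkQ_apply, Submodule.Quotient.mk_eq_zero]

lemma decomp_bij (n : ℕ) : Function.Bijective (decomp (F := F) n) := by
  constructor
  · rintro (Y | ⟨Y, c⟩) (Z | ⟨Z, d⟩) h <;> simp only [decomp] at h
    · congr 1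
      ext u
      have := mem_inlS Y 0 u
      rw [h, mem_inlS] at this
      simpa using this.symm
    · obtain ⟨u, hu⟩ := exists_inrS Z d
      rw [← h, mem_inlS] at hu
      exact absurd hu.1 one_ne_zero
    · obtain ⟨u, hu⟩ := exists_inrS Y c
      rw [h, mem_inlS] at hu
      exact absurd hu.1 one_ne_zero
    · have hY : Y = Z := by
        ext u
        rw [← mem_inrS_zero Y c, h, mem_inrS_zero]
      subst hY
      obtain ⟨u, hu⟩ := exists_inrS Y c
      have h1 := (mem_inrS _ _ _ _).mp hu
      rw [h, mem_inrS] at hu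
      rw [h1] at hu
      simp only [one_smul] at hu
      rw [hu]
  · intro Z
    set Y : Submodule F (Fin n → F) :=
      Z.comap (LinearMap.pi (Fin.cases 0 (fun i => LinearMap.proj i))) with hY
    have hmem : ∀ u, u ∈ Y ↔ (Fin.cons 0 u : Fin (n + 1) → F) ∈ Z := by
      intro u
      rw [hY, Submodule.mem_comap]
      have : (LinearMap.pi (Fin.cases 0 (fun i => LinearMap.proj i)) :
          (Fin n → F) →ₗ[F] (Fin (n + 1) → F)) u = Fin.cons 0 u := by
        funext i
        refine Fin.cases ?_ (fun i => ?_) i <;> simp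
      rw [this]
    by_cases h : ∃ w ∈ Z, w 0 ≠ 0
    · obtain ⟨w, hw, hw0⟩ := h
      have hw' : (Fin.cons 1 ((w 0)⁻¹ • tailL F n w) : Fin (n + 1) → F) ∈ Z := by
        have := Z.smul_mem (w 0)⁻¹ hw
        convert this using 1
        funext i
        refine Fin.cases ?_ (fun i => ?_) i <;> simp [tailL_apply, hw0]
      set v := (w 0)⁻¹ • tailL F n w
      refine ⟨Sum.inr ⟨Y, Y.mkQ v⟩, ?_⟩
      simp only [decomp]
      apply sub_ext_cons
      intro a u
      rw [mem_inrS, ← map_smul, ← sub_eq_zero, ← map_sub, Submodule.mkQ_apply,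
        Submodule.Quotient.mk_eq_zero, hmem]
      have e : (Fin.cons 0 (u - a • v) : Fin (n + 1) → F)
          = Fin.cons a u - a • (Fin.cons 1 v : Fin (n + 1) → F) := by
        funext i
        refine Fin.cases ?_ (fun i => ?_) i <;> simp
      rw [e]
      constructor
      · intro h
        have := Z.add_mem h (Z.smul_mem a hw')
        simpa using this
      · intro h
        exact Z.sub_mem h (Z.smul_mem a hw')
    · push Not at h
      refine ⟨Sum.inl Y, ?_⟩
      simp only [decomp]
      apply sub_ext_cons
      intro a u
      rw [mem_inlS, hmem]
      constructor
      · rintro ⟨rfl, h⟩; exact h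
      · intro hz
        have := h _ hz
        simp only [Fin.cons_zero] at this
        subst this
        exact ⟨rfl, hz⟩

lemma prod_sub_succ {M : Type*} [CommMonoid M] (n : ℕ) (f : Submodule F (Fin (n + 1) → F) → M) :
    ∏ Y, f Y = (∏ Y : Submodule F (Fin n → F), f (inlS Y)) *
      ∏ Y : Submodule F (Fin n → F), ∏ c : (Fin n → F) ⧸ Y, f (inrS Y c) := by
  rw [← (decomp_bij (F := F) n).prod_comp f, Fintype.prod_sum_type]
  congr 1
  rw [Fintype.prod_sigma]
  rfl

lemma sum_sub_succ {M : Type*} [AddCommMonoid M] (n : ℕ) (f : Submodule F (Fin (n + 1) → F) → M) :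
    ∑ Y, f Y = (∑ Y : Submodule F (Fin n → F), f (inlS Y)) +
      ∑ Y : Submodule F (Fin n → F), ∑ c : (Fin n → F) ⧸ Y, f (inrS Y c) := by
  rw [← (decomp_bij (F := F) n).sum_comp f, Fintype.sum_sum_type]
  congr 1
  rw [Fintype.sum_sigma]
  rfl

lemma sub_cases {n : ℕ} (Z : Submodule F (Fin (n + 1) → F)) :
    (∃ Y, Z = inlS Y) ∨ ∃ Y c, Z = inrS Y c := by
  obtain ⟨(Y | ⟨Y, c⟩), h⟩ := (decomp_bij (F := F) n).2 Z
  · exact Or.inl ⟨Y, h.symm⟩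
  · exact Or.inr ⟨Y, c, h.symm⟩

/-- The pivot set of a subspace. -/
def piv {n : ℕ} (Y : Submodule F (Fin n → F)) : Finset (Fin n) :=
  Finset.univ.filter fun i => ∃ v ∈ Y, v i ≠ 0 ∧ ∀ j < i, v j = 0

lemma zero_mem_piv {n : ℕ} (Z : Submodule F (Fin (n + 1) → F)) :
    0 ∈ piv Z ↔ ∃ a u, (Fin.cons a u : Fin (n + 1) → F) ∈ Z ∧ a ≠ 0 := by
  simp only [piv, Finset.mem_filter, Finset.mem_univ, true_and, Fin.not_lt_zero, false_imp_iff,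
    implies_true, and_true]
  constructor
  · rintro ⟨v, hv, h⟩
    exact ⟨v 0, Fin.tail v, by rwa [Fin.cons_self_tail], h⟩
  · rintro ⟨a, u, h, ha⟩
    exact ⟨_, h, by simpa using ha⟩

lemma succ_mem_piv {n : ℕ} (Z : Submodule F (Fin (n + 1) → F)) (Y : Submodule F (Fin n → F))
    (h : ∀ u, (Fin.cons 0 u : Fin (n + 1) → F) ∈ Z ↔ u ∈ Y) (i : Fin n) :
    i.succ ∈ piv Z ↔ i ∈ piv Y := by
  simp only [piv, Finset.mem_filter, Finset.mem_univ, true_and]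
  constructor
  · rintro ⟨v, hv, hi, hj⟩
    have h0 : v 0 = 0 := hj 0 (Fin.succ_pos i)
    refine ⟨Fin.tail v, ?_, hi, fun j hji => hj j.succ (Fin.succ_lt_succ_iff.mpr hji)⟩
    rw [← h, ← h0, Fin.cons_self_tail]; exact hv
  · rintro ⟨v, hv, hi, hj⟩
    refine ⟨Fin.cons 0 v, (h v).mpr hv, by simpa using hi, ?_⟩
    intro j
    refine Fin.cases ?_ (fun j => ?_) j
    · simp
    · intro hji; simpa using hj j (Fin.succ_lt_succ_iff.mp hji)

lemma piv_inlS {n : ℕ} (Y : Submodule F (Fin n → F)) :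
    piv (inlS Y) = (piv Y).map (Fin.succEmb n) := by
  ext i
  refine Fin.cases ?_ (fun i => ?_) i
  · rw [zero_mem_piv]
    simp [mem_inlS]
  · rw [succ_mem_piv _ Y (fun u => by simp [mem_inlS])]
    simp

lemma piv_inrS {n : ℕ} (Y : Submodule F (Fin n → F)) (c : (Fin n → F) ⧸ Y) :
    piv (inrS Y c) = insert 0 ((piv Y).map (Fin.succEmb n)) := by
  ext i
  refine Fin.cases ?_ (fun i => ?_) i
  · rw [zero_mem_piv]
    obtain ⟨u, hu⟩ := exists_inrS Y c
    simp only [Finset.mem_insert, true_or, iff_true]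
    exact ⟨1, u, hu, one_ne_zero⟩
  · rw [succ_mem_piv _ Y (fun u => by rw [mem_inrS_zero])]
    simp

lemma card_sub {n : ℕ} (Y : Submodule F (Fin n → F)) :
    (Finset.univ.filter fun v => v ∈ Y).card = Fintype.card F ^ Module.finrank F Y := by
  rw [← Module.card_eq_pow_finrank (K := F) (V := Y), Fintype.card_subtype]

lemma card_fiber {n : ℕ} (Y : Submodule F (Fin n → F)) (c : (Fin n → F) ⧸ Y) :
    (Finset.univ.filter fun v => Y.mkQ v = c).card = Fintype.card F ^ Module.finrank F Y := by
  obtain ⟨u, rfl⟩ := Y.mkQ_surjective c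
  rw [← card_sub]
  refine Finset.card_bij' (fun v _ => v - u) (fun v _ => v + u) ?_ ?_ ?_ ?_
  · intro v hv
    simp only [Finset.mem_filter, Finset.mem_univ, true_and] at hv ⊢
    rwa [← Submodule.Quotient.mk_eq_zero, ← Submodule.mkQ_apply, map_sub, sub_eq_zero]
  · intro v hv
    simp only [Finset.mem_filter, Finset.mem_univ, true_and] at hv ⊢
    rw [map_add, Submodule.mkQ_apply, (Submodule.Quotient.mk_eq_zero Y).mpr hv, zero_add]
  · intro v _; simp
  · intro v _; simp

lemma sum_cons {M : Type*} [AddCommMonoid M] {n : ℕ} (f : (Fin (n + 1) → F) → M) :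
    ∑ v, f v = ∑ a : F, ∑ u : Fin n → F, f (Fin.cons a u) := by
  rw [← (Fin.consEquiv (fun _ : Fin (n + 1) => F)).sum_comp, Fintype.sum_prod_type]
  rfl

lemma sum_inlS {M : Type*} [AddCommMonoid M] {n : ℕ} (f : (Fin (n + 1) → F) → M)
    (Y : Submodule F (Fin n → F)) :
    ∑ v, (if v ∈ inlS Y then f v else 0) = ∑ u, if u ∈ Y then f (Fin.cons 0 u) else 0 := by
  rw [sum_cons, Finset.sum_eq_single 0]
  · simp only [mem_inlS, true_and]
  · intro a _ ha
    simp [mem_inlS, ha]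
  · simp

lemma sum_inrS {M : Type*} [AddCommMonoid M] {n : ℕ} (f : (Fin (n + 1) → F) → M)
    (Y : Submodule F (Fin n → F)) (c : (Fin n → F) ⧸ Y) :
    ∑ v, (if v ∈ inrS Y c then f v else 0) = (∑ u, if u ∈ Y then f (Fin.cons 0 u) else 0)
      + ∑ a ∈ Finset.univ.filter (fun a : F => a ≠ 0),
          ∑ u ∈ Finset.univ.filter (fun u => Y.mkQ u = a • c), f (Fin.cons a u) := by
  rw [sum_cons, ← Finset.add_sum_erase _ _ (Finset.mem_univ (0 : F))]
  congr 1
  · simp only [mem_inrS_zero]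
  · have : Finset.univ.filter (fun a : F => a ≠ 0) = Finset.univ.erase 0 := by
      ext; simp
    rw [this]
    refine Finset.sum_congr rfl fun a ha => ?_
    rw [Finset.sum_filter]
    simp only [mem_inrS]

lemma card_ne_zero' : (Finset.univ.filter (fun a : F => a ≠ 0)).card = Fintype.card F - 1 := by
  have : Finset.univ.filter (fun a : F => a ≠ 0) = Finset.univ.erase 0 := by
    ext; simp
  rw [this, Finset.card_erase_of_mem (Finset.mem_univ _), Finset.card_univ]

lemma finrank_eq_card_piv {n : ℕ} (Y : Submodule F (Fin n → F)) :
    Module.finrank F Y = (piv Y).card := by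
  have hq : 1 < Fintype.card F := Fintype.one_lt_card
  apply Nat.pow_right_injective hq
  simp only
  rw [← card_sub]
  induction n with
  | zero =>
    have h1 : piv Y = ∅ := Finset.eq_empty_of_isEmpty _
    have h2 : (Finset.univ.filter fun v => v ∈ Y) = {0} := by
      ext v
      obtain rfl : v = 0 := Subsingleton.elim v 0
      simp only [Finset.mem_filter, Finset.mem_univ, true_and, Finset.mem_singleton, iff_true]
      exact Y.zero_mem
    rw [h1, h2]; rfl
  | succ n ih =>
    rw [Finset.card_eq_sum_ones, Finset.sum_filter]
    rcases sub_cases Y with ⟨Z, rfl⟩ | ⟨Z, c, rfl⟩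
    · rw [sum_inlS (fun _ => 1), piv_inlS, Finset.card_map, ← ih, Finset.card_eq_sum_ones,
        Finset.sum_filter]
    · rw [sum_inrS (fun _ => 1), piv_inrS, Finset.card_insert_of_notMem (by simp),
        Finset.card_map, pow_succ, ← ih, ← Finset.sum_filter, ← Finset.card_eq_sum_ones]
      simp only [← Finset.card_eq_sum_ones, card_fiber, ← card_sub]
      rw [Finset.sum_const, card_ne_zero', smul_eq_mul]
      obtain ⟨k, hk⟩ : ∃ k, Fintype.card F = k + 1 := ⟨_, (Nat.succ_pred_eq_of_pos (by omega)).symm⟩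
      rw [hk]; simp; ring

lemma card_quot {n : ℕ} (Y : Submodule F (Fin n → F)) :
    Fintype.card ((Fin n → F) ⧸ Y) = Fintype.card F ^ (n - (piv Y).card) := by
  rw [Module.card_eq_pow_finrank (K := F), Submodule.finrank_quotient, finrank_eq_card_piv]
  simp

/-- The exponent in the multiplicity. -/
def expo (n : ℕ) (S : Finset (Fin n)) : ℕ :=
  ∑ i ∈ S, (n - ((i : ℕ) + 1) - ((S.filter fun t => i ≤ t).card - 1))

lemma filter_map_succ {n : ℕ} (S : Finset (Fin n)) (i : Fin n) :
    ((S.map (Fin.succEmb n)).filter fun t => i.succ ≤ t).card = (S.filter fun t => i ≤ t).card := by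
  rw [Finset.filter_map, Finset.card_map]
  congr 1
  ext t
  refine Finset.mem_filter.trans (Iff.trans ?_ Finset.mem_filter.symm)
  simp

lemma filter_insert_succ {n : ℕ} (S : Finset (Fin n)) (i : Fin n) :
    ((insert 0 (S.map (Fin.succEmb n))).filter fun t => i.succ ≤ t).card
      = (S.filter fun t => i ≤ t).card := by
  rw [Finset.filter_insert, if_neg (by simp), filter_map_succ]

lemma expo_map {n : ℕ} (S : Finset (Fin n)) : expo (n + 1) (S.map (Fin.succEmb n)) = expo n S := by
  unfold expo
  rw [Finset.sum_map]
  refine Finset.sum_congr rfl fun i _ => ?_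
  rw [Fin.coe_succEmb, filter_map_succ, Fin.val_succ]
  omega

lemma expo_insert {n : ℕ} (S : Finset (Fin n)) :
    expo (n + 1) (insert 0 (S.map (Fin.succEmb n))) = (n - S.card) + expo n S := by
  unfold expo
  rw [Finset.sum_insert (by simp), Finset.sum_map]
  congr 1
  · rw [Finset.filter_true_of_mem (by simp), Finset.card_insert_of_notMem (by simp),
      Finset.card_map]
    simp
  · refine Finset.sum_congr rfl fun i _ => ?_
    rw [Fin.coe_succEmb, filter_insert_succ, Fin.val_succ]
    omega

lemma lambdaS_map {n : ℕ} (q : ℝ) (x : Fin (n + 1) → ℝ) (S : Finset (Fin n)) :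
    lambdaS ℝ (n + 1) q x (S.map (Fin.succEmb n)) = lambdaS ℝ n q (fun i => x i.succ) S := by
  unfold lambdaS
  rw [Finset.sum_map]
  refine Finset.sum_congr rfl fun i _ => ?_
  rw [Fin.coe_succEmb, filter_map_succ, Fin.val_succ]
  congr 2
  push_cast; ring

lemma lambdaS_insert {n : ℕ} (q : ℝ) (x : Fin (n + 1) → ℝ) (S : Finset (Fin n)) :
    lambdaS ℝ (n + 1) q x (insert 0 (S.map (Fin.succEmb n)))
      = x 0 / q ^ ((n : ℤ) - S.card) + lambdaS ℝ n q (fun i => x i.succ) S := by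
  unfold lambdaS
  rw [Finset.sum_insert (by simp), Finset.sum_map]
  congr 1
  · rw [Finset.filter_true_of_mem (by simp), Finset.card_insert_of_notMem (by simp),
      Finset.card_map]
    congr 2
    push_cast; simp only [Fin.val_zero]; push_cast; ring
  · refine Finset.sum_congr rfl fun i _ => ?_
    rw [Fin.coe_succEmb, filter_insert_succ, Fin.val_succ]
    congr 2
    push_cast; ring

lemma prod_finset_succ {M : Type*} [CommMonoid M] (n : ℕ) (g : Finset (Fin (n + 1)) → M) :
    ∏ S, g S = (∏ S : Finset (Fin n), g (S.map (Fin.succEmb n))) *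
      ∏ S : Finset (Fin n), g (insert 0 (S.map (Fin.succEmb n))) := by
  have h : (Finset.univ : Finset (Finset (Fin (n + 1))))
      = (insert 0 (Finset.univ.map (Fin.succEmb n))).powerset := by
    rw [← Finset.powerset_univ]
    congr 1
    ext i
    refine Fin.cases ?_ (fun i => ?_) i <;> simp
  have h2 : ∀ f : Finset (Fin (n + 1)) → M,
      ∏ S ∈ ((Finset.univ : Finset (Fin n)).map (Fin.succEmb n)).powerset, f S
        = ∏ S : Finset (Fin n), f (S.map (Fin.succEmb n)) := by
    intro f
    symm
    refine Finset.prod_bij (fun S _ => S.map (Fin.succEmb n)) ?_ ?_ ?_ ?_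
    · intro S _
      rw [Finset.mem_powerset]
      exact Finset.map_subset_map.mpr (Finset.subset_univ _)
    · intro S _ T _ h
      exact Finset.map_injective _ h
    · intro S hS
      rw [Finset.mem_powerset, Finset.subset_map_iff] at hS
      obtain ⟨u, _, rfl⟩ := hS
      exact ⟨u, Finset.mem_univ _, rfl⟩
    · intro S _; rfl
  rw [h, Finset.prod_powerset_insert (by simp), h2, h2]

lemma prod_piv {M : Type*} [CommMonoid M] (n : ℕ) (g : Finset (Fin n) → M) :
    ∏ Y : Submodule F (Fin n → F), g (piv Y)
      = ∏ S : Finset (Fin n), g S ^ (Fintype.card F ^ expo n S) := by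
  induction n with
  | zero =>
    have h : ∀ S : Finset (Fin 0), S = ∅ := fun S => Finset.eq_empty_of_isEmpty _
    let huniq : Unique (Submodule F (Fin 0 → F)) :=
      ⟨⟨⊥⟩, fun Y => Subsingleton.elim _ _⟩
    rw [Fintype.prod_eq_single ∅ (fun S hS => absurd (h S) hS), Fintype.prod_unique, h (piv _)]
    simp [expo]
  | succ n ih =>
    rw [prod_sub_succ, prod_finset_succ]
    simp only [piv_inlS, piv_inrS, expo_map, expo_insert]
    congr 1
    · exact ih (fun S => g (S.map (Fin.succEmb n)))
    · simp only [Finset.prod_const, Finset.card_univ, card_quot]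
      rw [ih (fun S => g (insert 0 (S.map (Fin.succEmb n))) ^ Fintype.card F ^ (n - S.card))]
      refine Finset.prod_congr rfl fun S _ => ?_
      rw [← pow_mul, pow_add]

lemma sum_sub_Bq (n : ℕ) (z : ℕ → ℤ) :
    ∑ Y : Submodule F (Fin n → F), z (n - Module.finrank F Y) = Bq (Fintype.card F) n z := by
  simp only [finrank_eq_card_piv]
  induction n generalizing z with
  | zero =>
    have h : ∀ S : Finset (Fin 0), S = ∅ := fun S => Finset.eq_empty_of_isEmpty _
    let huniq : Unique (Submodule F (Fin 0 → F)) :=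
      ⟨⟨⊥⟩, fun Y => Subsingleton.elim _ _⟩
    rw [Fintype.sum_unique]
    simp [Bq]
  | succ n ih =>
    rw [sum_sub_succ]
    simp only [piv_inlS, piv_inrS, Finset.card_map]
    rw [Bq, ← ih, ← ih, add_comm]
    congr 1
    · refine Finset.sum_congr rfl fun Y _ => ?_
      rw [Finset.sum_const, Finset.card_univ, card_quot, Finset.card_insert_of_notMem (by simp),
        Finset.card_map]
      simp
    · refine Finset.sum_congr rfl fun Y _ => ?_
      have : (piv Y).card ≤ n := by simpa using Finset.card_le_univ (piv Y)
      congr 1; omega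

lemma sum_sub_Bq' {V : Type*} [AddCommGroup V] [Module F V] [Finite V] (z : ℕ → ℤ) :
    ∑ Y : Submodule F V, z (Module.finrank F V - Module.finrank F Y)
      = Bq (Fintype.card F) (Module.finrank F V) z := by
  let e : V ≃ₗ[F] (Fin (Module.finrank F V) → F) :=
    (Module.finBasis F V).equivFun
  rw [← sum_sub_Bq (F := F), ← (Submodule.orderIsoMapComap e).toEquiv.sum_comp]
  refine Finset.sum_congr rfl fun Y _ => ?_
  congr 2
  exact (LinearEquiv.finrank_eq (e.submoduleMap Y))

lemma sum_ge_Bq {V : Type*} [AddCommGroup V] [Module F V] [Finite V] (z : ℕ → ℤ)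
    (W : Submodule F V) :
    ∑ Y ∈ Finset.univ.filter (fun Y : Submodule F V => W ≤ Y),
        z (Module.finrank F V - Module.finrank F Y)
      = Bq (Fintype.card F) (Module.finrank F V - Module.finrank F W) z := by
  have hfin : Module.Finite F V := Module.Finite.of_finite
  rw [← Submodule.finrank_quotient W, ← sum_sub_Bq' (V := V ⧸ W)]
  symm
  refine Finset.sum_bij (fun Y _ => Y.comap W.mkQ) ?_ ?_ ?_ ?_
  · intro Y _
    simp only [Finset.mem_filter, Finset.mem_univ, true_and]
    exact Submodule.le_comap_mkQ W Y
  · intro Y _ Z _ h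
    exact Submodule.comap_injective_of_surjective W.mkQ_surjective h
  · intro Y hY
    simp only [Finset.mem_filter, Finset.mem_univ, true_and] at hY
    exact ⟨Y.map W.mkQ, Finset.mem_univ _, by rw [Submodule.comap_map_mkQ, sup_eq_right.mpr hY]⟩
  · intro Y _
    congr 1
    have h1 := Submodule.finrank_quotient_add_finrank W
    have h2 : Module.finrank F (Y.comap W.mkQ) = Module.finrank F Y + Module.finrank F W := by
      have hsurj : Function.Surjective (Y.mkQ.comp W.mkQ) :=
        Y.mkQ_surjective.comp W.mkQ_surjective
      have h3 := LinearMap.finrank_range_add_finrank_ker (Y.mkQ.comp W.mkQ)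
      rw [LinearMap.range_eq_top.mpr hsurj, finrank_top, LinearMap.ker_comp,
        Submodule.ker_mkQ] at h3
      have h4 := Submodule.finrank_quotient_add_finrank Y
      omega
    omega

/-- The weight of a vector. -/
def wt {n : ℕ} (x : Fin n → ℝ) (v : Fin n → F) : ℝ :=
  ∑ i, if v i ≠ 0 ∧ ∀ j < i, v j = 0 then
    x i / (Fintype.card F : ℝ) ^ (n - 1 - (i : ℕ)) / ((Fintype.card F : ℝ) - 1) else 0

lemma wt_cons {n : ℕ} (x : Fin (n + 1) → ℝ) (a : F) (u : Fin n → F) :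
    wt x (Fin.cons a u : Fin (n + 1) → F) =
      if a ≠ 0 then x 0 / (Fintype.card F : ℝ) ^ n / ((Fintype.card F : ℝ) - 1)
      else wt (fun i => x i.succ) u := by
  unfold wt
  rw [Fin.sum_univ_succ]
  by_cases ha : a = 0
  · subst ha
    simp only [Fin.cons_zero, ne_eq, not_true_eq_false, false_and, if_false, zero_add]
    refine Finset.sum_congr rfl fun i _ => ?_
    have h1 : (∀ j < i.succ, (Fin.cons 0 u : Fin (n + 1) → F) j = 0) ↔ ∀ j < i, u j = 0 := by
      constructor
      · intro h j hj; simpa using h j.succ (Fin.succ_lt_succ_iff.mpr hj)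
      · intro h j
        refine Fin.cases ?_ (fun j => ?_) j
        · simp
        · intro hj; simpa using h j (Fin.succ_lt_succ_iff.mp hj)
    simp only [h1, Fin.cons_succ, Fin.val_succ]
    rw [show n + 1 - 1 - ((i : ℕ) + 1) = n - 1 - (i : ℕ) by omega]
  · rw [Finset.sum_eq_zero]
    · simp [ha]
    · intro i _
      rw [if_neg]
      rintro ⟨_, h⟩
      exact ha (by simpa using h 0 (Fin.succ_pos i))

lemma wt_nonneg {n : ℕ} (x : Fin n → ℝ) (hx : ∀ i, 0 ≤ x i) (v : Fin n → F) : 0 ≤ wt x v := by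
  have hq : (1 : ℝ) < Fintype.card F := by exact_mod_cast Fintype.one_lt_card (α := F)
  unfold wt
  refine Finset.sum_nonneg fun i _ => ?_
  split_ifs
  · have := hx i
    have h2 : (0 : ℝ) < Fintype.card F - 1 := by linarith
    positivity
  · exact le_rfl

/-- The eigenvalue attached to a subspace. -/
def lamY {n : ℕ} (x : Fin n → ℝ) (Y : Submodule F (Fin n → F)) : ℝ :=
  ∑ v, if v ∈ Y then wt x v else 0

lemma lamY_eq {n : ℕ} (x : Fin n → ℝ) (Y : Submodule F (Fin n → F)) :
    lamY x Y = lambdaS ℝ n (Fintype.card F : ℝ) x (piv Y) := by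
  have hq : (1 : ℝ) < Fintype.card F := by exact_mod_cast Fintype.one_lt_card (α := F)
  induction n with
  | zero =>
    have h : ∀ S : Finset (Fin 0), S = ∅ := fun S => Finset.eq_empty_of_isEmpty _
    rw [h (piv Y)]
    simp [lamY, wt, lambdaS]
  | succ n ih =>
    have h0 : ∀ Z : Submodule F (Fin n → F), (∑ u, if u ∈ Z then
        wt x (Fin.cons 0 u : Fin (n + 1) → F) else 0)
        = lambdaS ℝ n (Fintype.card F : ℝ) (fun i => x i.succ) (piv Z) := by
      intro Z
      rw [← ih]
      unfold lamY
      simp [wt_cons]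
    rcases sub_cases Y with ⟨Z, rfl⟩ | ⟨Z, c, rfl⟩
    · rw [piv_inlS, lambdaS_map, lamY, sum_inlS, h0]
    · rw [piv_inrS, lambdaS_insert, lamY, sum_inrS, h0, add_comm]
      congr 1
      rw [Finset.sum_congr rfl (g := fun _ => ((Fintype.card F : ℝ) ^ (piv Z).card) *
        (x 0 / (Fintype.card F : ℝ) ^ n / ((Fintype.card F : ℝ) - 1)))]
      · rw [Finset.sum_const, card_ne_zero', nsmul_eq_mul,
          Nat.cast_sub (Fintype.card_pos), Nat.cast_one]
        have h2 : (Fintype.card F : ℝ) - 1 ≠ 0 := by linarith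
        have h3 : (Fintype.card F : ℝ) ≠ 0 := by linarith
        rw [zpow_sub₀ h3, zpow_natCast, zpow_natCast]
        field_simp
      · intro a ha
        have ha' : a ≠ 0 := (Finset.mem_filter.mp ha).2
        simp only [wt_cons, if_pos ha']
        rw [Finset.sum_const, card_fiber, finrank_eq_card_piv, nsmul_eq_mul]
        push_cast; rfl

end PartC

section PartD
variable {F : Type} [Field F] [Fintype F] [DecidableEq F] {n : ℕ}

/-- The `j`-th column. -/
def col (g : GLn F n) (j : Fin n) : Fin n → F := fun i => (g : Matrix (Fin n) (Fin n) F) i j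

/-- Span of the first `i` columns. -/
def Vg (g : GLn F n) (i : ℕ) : Submodule F (Fin n → F) :=
  Submodule.span F (col g '' {j : Fin n | (j : ℕ) < i})

lemma Vg_zero (g : GLn F n) : Vg g 0 = ⊥ := by simp [Vg]

lemma Vg_succ (g : GLn F n) (i : ℕ) (h : i < n) :
    Vg g (i + 1) = Vg g i ⊔ Submodule.span F {col g ⟨i, h⟩} := by
  unfold Vg
  rw [← Submodule.span_union, ← Set.image_singleton, ← Set.image_union]
  congr 2
  ext j
  simp only [Set.mem_ofPred_eq, Set.mem_union, Set.mem_singleton_iff, Fin.ext_iff]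
  omega

lemma Vg_mono (g : GLn F n) : Monotone (Vg g) := by
  intro i j hij
  apply Submodule.span_mono
  apply Set.image_mono
  intro k hk
  exact lt_of_lt_of_le hk hij

lemma Vg_big (g : GLn F n) (i : ℕ) (h : n ≤ i) : Vg g i = Vg g n := by
  unfold Vg
  congr 2
  ext j
  have := j.2
  simp only [Set.mem_ofPred_eq]
  omega

lemma col_indep (g : GLn F n) : LinearIndependent F (col g) :=
  Matrix.linearIndependent_cols_of_isUnit (A := (g : Matrix (Fin n) (Fin n) F)) g.isUnit

lemma finrank_Vg (g : GLn F n) (i : ℕ) (h : i ≤ n) : Module.finrank F (Vg g i) = i := by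
  have h1 := (col_indep g).comp (fun j : {j : Fin n // (j : ℕ) < i} => j.1) Subtype.val_injective
  have h2 := finrank_span_eq_card h1
  have h3 : Set.range (col g ∘ fun j : {j : Fin n // (j : ℕ) < i} => j.1)
      = col g '' {j : Fin n | (j : ℕ) < i} := by
    rw [Set.range_comp]
    exact congrArg _ Subtype.range_coe
  rw [h3] at h2
  rw [Vg, h2]
  rw [Fintype.card_subtype]
  have : (Finset.univ.filter fun j : Fin n => (j : ℕ) < i)
      = Finset.univ.map (Fin.castLEEmb h) := by
    ext j
    simp only [Finset.mem_filter, Finset.mem_univ, true_and, Finset.mem_map]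
    constructor
    · intro hj; exact ⟨⟨j, hj⟩, rfl⟩
    · rintro ⟨a, rfl⟩; exact a.2
  rw [this]; simp

lemma Vg_n (g : GLn F n) : Vg g n = ⊤ := by
  apply Submodule.eq_top_of_finrank_eq
  rw [finrank_Vg g n le_rfl]; simp

lemma col_mul (g h : GLn F n) (j : Fin n) :
    col (g * h) j = ∑ k, (h : Matrix (Fin n) (Fin n) F) k j • col g k := by
  funext i
  simp only [col, Units.val_mul, Matrix.mul_apply, Finset.sum_apply, Pi.smul_apply, smul_eq_mul]
  exact Finset.sum_congr rfl fun k _ => mul_comm _ _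

lemma Vg_mul_le (g b : GLn F n) (hb : b ∈ Bsub F n) (i : ℕ) : Vg (g * b) i ≤ Vg g i := by
  apply Submodule.span_le.mpr
  rintro _ ⟨j, hj, rfl⟩
  rw [col_mul]
  apply Submodule.sum_mem
  intro k _
  by_cases hk : j < k
  · have : (b : Matrix (Fin n) (Fin n) F) k j = 0 := hb k j hk
    rw [this, zero_smul]; exact Submodule.zero_mem _
  · apply Submodule.smul_mem
    apply Submodule.subset_span
    refine ⟨k, ?_, rfl⟩
    have h1 : (k : ℕ) ≤ j := not_lt.mp hk
    exact lt_of_le_of_lt h1 hj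

lemma Vg_mul (g b : GLn F n) (hb : b ∈ Bsub F n) (i : ℕ) : Vg (g * b) i = Vg g i := by
  apply le_antisymm (Vg_mul_le g b hb i)
  have := Vg_mul_le (g * b) b⁻¹ ((Bsub F n).inv_mem hb) i
  rwa [mul_inv_cancel_right] at this

/-- The flag of a coset. -/
def VC (C : Cosets F n) (i : ℕ) : Submodule F (Fin n → F) := Vg C.out i

lemma VC_mk (g : GLn F n) (i : ℕ) : VC (QuotientGroup.mk g : Cosets F n) i = Vg g i := by
  obtain ⟨b, hb⟩ := QuotientGroup.mk_out_eq_mul (Bsub F n) g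
  unfold VC
  rw [hb, Vg_mul _ _ b.2]

lemma VC_inj (C D : Cosets F n) (h : ∀ i, VC C i = VC D i) : C = D := by
  rw [← QuotientGroup.out_eq' C, ← QuotientGroup.out_eq' D, QuotientGroup.eq]
  set g := C.out
  set k := D.out
  intro i j hij
  have h1 : col k j ∈ Vg g (j + 1) := by
    have h2 := h (j + 1)
    unfold VC at h2
    rw [h2]
    exact Submodule.subset_span ⟨j, Nat.lt_succ_self _, rfl⟩
  have h3 : Vg g (j + 1) ≤ LinearMap.ker ((LinearMap.proj (R := F) (φ := fun _ : Fin n => F) i).comp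
      (Matrix.mulVecLin ((g⁻¹ : GLn F n) : Matrix (Fin n) (Fin n) F))) := by
    apply Submodule.span_le.mpr
    rintro _ ⟨l, hl, rfl⟩
    have hli : l ≠ i := by
      rintro rfl
      have h5 : (j : ℕ) < l := hij
      have h6 : (l : ℕ) < j + 1 := hl
      omega
    have h4 : (((g⁻¹ : GLn F n) : Matrix (Fin n) (Fin n) F) *
        (g : Matrix (Fin n) (Fin n) F)) i l = 0 := by
      rw [← Units.val_mul, inv_mul_cancel, Units.val_one, Matrix.one_apply_ne hli.symm]
    exact h4
  exact h3 h1

/-- The flag as a set. -/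
def fset (C : Cosets F n) : Set (Submodule F (Fin n → F)) := Set.range (VC C)

lemma finrank_VC (C : Cosets F n) (i : ℕ) (h : i ≤ n) : Module.finrank F (VC C i) = i :=
  finrank_Vg _ _ h

lemma VC_mono (C : Cosets F n) : Monotone (VC C) := Vg_mono _

lemma VC_zero (C : Cosets F n) : VC C 0 = ⊥ := Vg_zero _

lemma VC_n (C : Cosets F n) : VC C n = ⊤ := Vg_n _

lemma bot_mem (C : Cosets F n) : ⊥ ∈ fset C := ⟨0, VC_zero C⟩

lemma eq_VC_of_mem (C : Cosets F n) (W : Submodule F (Fin n → F)) (h : W ∈ fset C) :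
    W = VC C (Module.finrank F W) := by
  obtain ⟨i, rfl⟩ := h
  by_cases hi : i ≤ n
  · rw [finrank_VC C i hi]
  · have : VC C i = VC C n := Vg_big _ _ (by omega)
    rw [this, finrank_VC C n le_rfl]

lemma fset_inj (C D : Cosets F n) (h : fset C = fset D) : C = D := by
  apply VC_inj
  have key : ∀ i ≤ n, VC C i = VC D i := by
    intro i hi
    have h1 : VC C i ∈ fset D := h ▸ ⟨i, rfl⟩
    have h2 := eq_VC_of_mem D _ h1
    rwa [finrank_VC C i hi] at h2
  intro i
  by_cases hi : i ≤ n
  · exact key i hi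
  · rw [show VC C i = VC C n from Vg_big _ _ (by omega),
      show VC D i = VC D n from Vg_big _ _ (by omega), key n le_rfl]

/-- One step of the Hecke generator. -/
def hopG (k : ℕ) (h : k + 1 < n) (t : F) : GLn F n :=
  if t = 0 then permGL F n (Equiv.swap ⟨k, Nat.lt_of_succ_lt h⟩ ⟨k + 1, h⟩)
  else transvGL F n ⟨k + 1, h⟩ ⟨k, Nat.lt_of_succ_lt h⟩
          (fun hc => by simp [Fin.ext_iff] at hc) t

/-- One step of the Hecke generator, on cosets. -/
def hop (C : Cosets F n) (k : ℕ) (h : k + 1 < n) (t : F) : Cosets F n :=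
  QuotientGroup.mk (C.out * hopG k h t)

lemma genGB_eq (k : ℕ) (h : k + 1 < n) (C D : Cosets F n) :
    genGB F n ℂ k C D = ∑ t : F, if hop C k h t = D then (1 : ℂ) else 0 := by
  unfold genGB
  rw [dif_pos h, ← Finset.add_sum_erase _ _ (Finset.mem_univ (0 : F))]
  congr 1
  · simp [hop, hopG]
  · rw [Finset.card_filter]
    push_cast
    rw [← Finset.add_sum_erase _ _ (Finset.mem_univ (0 : F))]
    simp only [ne_eq, not_true_eq_false, false_and, if_false, zero_add]
    refine Finset.sum_congr rfl fun t ht => ?_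
    have ht' : t ≠ 0 := Finset.ne_of_mem_erase ht
    simp [hop, hopG, ht']

lemma col_perm (g : GLn F n) (π : Equiv.Perm (Fin n)) (j : Fin n) :
    col (g * permGL F n π) j = col g (π j) := by
  rw [col_mul, Finset.sum_eq_single (π j)]
  · simp [permGL, permMat]
  · intro k _ hk
    simp [permGL, permMat, hk.symm]
  · simp

lemma col_transv (g : GLn F n) (r c : Fin n) (h : r ≠ c) (t : F) (j : Fin n) :
    col (g * transvGL F n r c h t) j = if j = c then col g c + t • col g r else col g j := by
  rw [col_mul]
  simp only [transvGL, Matrix.transvection, Matrix.add_apply, add_smul, Finset.sum_add_distrib]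
  have h1 : ∑ x, (1 : Matrix (Fin n) (Fin n) F) x j • col g x = col g j := by
    rw [Finset.sum_eq_single j]
    · simp
    · intro k _ hk; simp [Matrix.one_apply_ne hk]
    · simp
  have h2 : ∑ x, (Matrix.single r c t) x j • col g x = if j = c then t • col g r else 0 := by
    rw [Finset.sum_eq_single r]
    · by_cases hj : j = c
      · subst hj; simp
      · simp [Matrix.single_apply, hj, Ne.symm hj]
    · intro k _ hk; simp [Matrix.single_apply, hk.symm]
    · simp
  rw [h1, h2]
  split_ifs with hj
  · rw [hj]
  · simp

lemma step_Vg (g g' : GLn F n) (k : ℕ) (h : k + 1 < n)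
    (h1 : ∀ j : Fin n, (j : ℕ) ≠ k → (j : ℕ) ≠ k + 1 → col g' j = col g j)
    (h2 : Submodule.span F {col g' ⟨k, Nat.lt_of_succ_lt h⟩} ⊔ Submodule.span F {col g' ⟨k + 1, h⟩}
      = Submodule.span F {col g ⟨k, Nat.lt_of_succ_lt h⟩} ⊔ Submodule.span F {col g ⟨k + 1, h⟩}) :
    ∀ i, i ≠ k + 1 → Vg g' i = Vg g i := by
  have low : ∀ i ≤ k, Vg g' i = Vg g i := by
    intro i hi
    unfold Vg
    congr 1
    apply Set.image_congr
    intro j hj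
    have : (j : ℕ) < i := hj
    exact h1 j (by omega) (by omega)
  have mid : Vg g' (k + 2) = Vg g (k + 2) := by
    rw [Vg_succ g' (k + 1) h, Vg_succ g (k + 1) h, Vg_succ g' k (by omega), Vg_succ g k (by omega),
      sup_assoc, sup_assoc, h2, low k le_rfl]
  have high : ∀ d, k + 2 + d ≤ n → Vg g' (k + 2 + d) = Vg g (k + 2 + d) := by
    intro d
    induction d with
    | zero => intro _; exact mid
    | succ d ih =>
      intro hd
      rw [← add_assoc, Vg_succ g' _ (by omega), Vg_succ g _ (by omega), ih (by omega),
        h1 _ (by simp; omega) (by simp; omega)]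
  intro i hi
  rcases Nat.lt_or_ge i (k + 1) with h3 | h3
  · exact low i (by omega)
  · by_cases h4 : i ≤ n
    · obtain ⟨d, rfl⟩ : ∃ d, i = k + 2 + d := ⟨i - (k + 2), by omega⟩
      exact high d h4
    · rw [Vg_big g' i (by omega), Vg_big g i (by omega), Vg_n, Vg_n]

lemma span_add_smul {V : Type*} [AddCommGroup V] [Module F V] (a b : V) (t : F) :
    Submodule.span F {a + t • b} ⊔ Submodule.span F {b}
      = Submodule.span F {a} ⊔ Submodule.span F {b} := by
  have hb : ∀ X : Submodule F V, b ∈ X ⊔ Submodule.span F {b} := fun X =>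
    (le_sup_right : _ ≤ X ⊔ Submodule.span F {b}) (Submodule.mem_span_singleton_self b)
  apply le_antisymm
  · refine sup_le ?_ le_sup_right
    rw [Submodule.span_singleton_le_iff_mem]
    exact Submodule.add_mem _ ((le_sup_left : Submodule.span F {a} ≤ _)
      (Submodule.mem_span_singleton_self a)) (Submodule.smul_mem _ _ (hb _))
  · refine sup_le ?_ le_sup_right
    rw [Submodule.span_singleton_le_iff_mem]
    have h := Submodule.sub_mem _ ((le_sup_left : Submodule.span F {a + t • b} ≤ _ ⊔
      Submodule.span F {b}) (Submodule.mem_span_singleton_self _))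
      (Submodule.smul_mem _ t (hb (Submodule.span F {a + t • b})))
    rwa [add_sub_cancel_right] at h

/-- The new column. -/
def ncol (C : Cosets F n) (k : ℕ) (h : k + 1 < n) (t : F) : Fin n → F :=
  if t = 0 then col C.out ⟨k + 1, h⟩
  else col C.out ⟨k, Nat.lt_of_succ_lt h⟩ + t • col C.out ⟨k + 1, h⟩

lemma hop_spec (C : Cosets F n) (k : ℕ) (h : k + 1 < n) (t : F) :
    (∀ i, i ≠ k + 1 → VC (hop C k h t) i = VC C i) ∧
    VC (hop C k h t) (k + 1) = VC C k ⊔ Submodule.span F {ncol C k h t} := by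
  have hne : (⟨k + 1, h⟩ : Fin n) ≠ ⟨k, Nat.lt_of_succ_lt h⟩ := by simp [Fin.ext_iff]
  have c1 : col (C.out * hopG k h t) ⟨k, Nat.lt_of_succ_lt h⟩ = ncol C k h t := by
    unfold hopG ncol
    split_ifs with ht
    · rw [col_perm, Equiv.swap_apply_left]
    · rw [col_transv, if_pos rfl]
  have c2 : col (C.out * hopG k h t) ⟨k + 1, h⟩ =
      if t = 0 then col C.out ⟨k, Nat.lt_of_succ_lt h⟩ else col C.out ⟨k + 1, h⟩ := by
    unfold hopG
    split_ifs with ht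
    · rw [col_perm, Equiv.swap_apply_right]
    · rw [col_transv, if_neg hne]
  have c3 : ∀ j : Fin n, (j : ℕ) ≠ k → (j : ℕ) ≠ k + 1 →
      col (C.out * hopG k h t) j = col C.out j := by
    intro j hj1 hj2
    have hj1' : j ≠ ⟨k, Nat.lt_of_succ_lt h⟩ := fun e => hj1 (by rw [e])
    have hj2' : j ≠ ⟨k + 1, h⟩ := fun e => hj2 (by rw [e])
    unfold hopG
    split_ifs with ht
    · rw [col_perm, Equiv.swap_apply_of_ne_of_ne hj1' hj2']
    · rw [col_transv, if_neg hj1']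
  have c4 : Submodule.span F {col (C.out * hopG k h t) ⟨k, Nat.lt_of_succ_lt h⟩} ⊔
        Submodule.span F {col (C.out * hopG k h t) ⟨k + 1, h⟩}
      = Submodule.span F {col C.out ⟨k, Nat.lt_of_succ_lt h⟩} ⊔
        Submodule.span F {col C.out ⟨k + 1, h⟩} := by
    rw [c1, c2, ncol]
    split_ifs with ht
    · rw [sup_comm]
    · exact span_add_smul _ _ _
  have key := step_Vg C.out (C.out * hopG k h t) k h c3 c4
  constructor
  · intro i hi
    rw [hop, VC_mk]; exact key i hi
  · rw [hop, VC_mk, Vg_succ _ k (by omega), c1, key k (by omega)]; rfl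

end PartD

section PartE
variable {F : Type} [Field F] [Fintype F] [DecidableEq F] {n : ℕ}

lemma eq_sup_span {A W : Submodule F (Fin n → F)} {v : Fin n → F} (k : ℕ)
    (hA : Module.finrank F A = k) (hW : Module.finrank F W = k + 1) (hAW : A ≤ W)
    (hv : v ∈ W) (hvA : v ∉ A) : W = A ⊔ Submodule.span F {v} := by
  have hle : A ⊔ Submodule.span F {v} ≤ W :=
    sup_le hAW ((Submodule.span_singleton_le_iff_mem _ _).mpr hv)
  have hlt : A < A ⊔ Submodule.span F {v} := by
    refine lt_of_le_of_ne le_sup_left fun h => hvA ?_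
    rw [h]
    exact (le_sup_right : Submodule.span F {v} ≤ _) (Submodule.mem_span_singleton_self v)
  have h1 := Submodule.finrank_lt_finrank_of_lt hlt
  exact (Submodule.eq_of_le_of_finrank_le hle (by omega)).symm

lemma col_mem (C : Cosets F n) (k : ℕ) (h : k < n) : col C.out ⟨k, h⟩ ∈ VC C (k + 1) :=
  Submodule.subset_span ⟨⟨k, h⟩, Nat.lt_succ_self _, rfl⟩

lemma VC_succ (C : Cosets F n) (k : ℕ) (h : k < n) :
    VC C (k + 1) = VC C k ⊔ Submodule.span F {col C.out ⟨k, h⟩} := Vg_succ _ _ _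

lemma cols_big (C : Cosets F n) (k : ℕ) (h : k + 1 < n) (U : Submodule F (Fin n → F))
    (hU : Module.finrank F U = k + 1) (h0 : VC C k ≤ U)
    (h1 : col C.out ⟨k, Nat.lt_of_succ_lt h⟩ ∈ U) (h2 : col C.out ⟨k + 1, h⟩ ∈ U) : False := by
  have : VC C (k + 2) ≤ U := by
    rw [VC_succ C (k + 1) h, VC_succ C k (by omega)]
    exact sup_le (sup_le h0 ((Submodule.span_singleton_le_iff_mem _ _).mpr h1))
      ((Submodule.span_singleton_le_iff_mem _ _).mpr h2)
  have h3 := Submodule.finrank_mono this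
  rw [finrank_VC C (k + 2) (by omega)] at h3
  omega

lemma hop_sup (C : Cosets F n) (k : ℕ) (h : k + 1 < n) (t : F) (v : Fin n → F)
    (hv : v ∈ VC (hop C k h t) (k + 1)) (hvk : v ∉ VC C k) :
    VC (hop C k h t) (k + 1) = VC C k ⊔ Submodule.span F {v} := by
  refine eq_sup_span k (finrank_VC C k (by omega)) (finrank_VC _ (k + 1) (by omega)) ?_ hv hvk
  rw [← (hop_spec C k h t).1 k (by omega)]
  exact VC_mono _ (Nat.le_succ k)

lemma ncol_mem (C : Cosets F n) (k : ℕ) (h : k + 1 < n) (t : F) :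
    ncol C k h t ∈ VC (hop C k h t) (k + 1) := by
  rw [(hop_spec C k h t).2]
  exact (le_sup_right : Submodule.span F {ncol C k h t} ≤ _) (Submodule.mem_span_singleton_self _)

lemma hop_unique (C : Cosets F n) (k : ℕ) (h : k + 1 < n) (t s : F) (v : Fin n → F)
    (hvk : v ∉ VC C k)
    (ht : v ∈ VC (hop C k h t) (k + 1)) (hs : v ∈ VC (hop C k h s) (k + 1)) : t = s := by
  by_contra hts
  have e1 := hop_sup C k h t v ht hvk
  have e2 := hop_sup C k h s v hs hvk
  set U := VC (hop C k h t) (k + 1) with hU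
  have m1 : ncol C k h t ∈ U := ncol_mem C k h t
  have m2 : ncol C k h s ∈ U := by
    have := ncol_mem C k h s
    rwa [e2, ← e1] at this
  have h0 : VC C k ≤ U := by rw [e1]; exact le_sup_left
  have hr : Module.finrank F U = k + 1 := finrank_VC _ (k + 1) (by omega)
  have main : ∀ t s : F, t ≠ s → s ≠ 0 → ncol C k h t ∈ U → ncol C k h s ∈ U → False := by
    intro t s hts hs0 m1 m2
    unfold ncol at m1 m2
    rw [if_neg hs0] at m2
    have hb : col C.out ⟨k + 1, h⟩ ∈ U := by
      by_cases ht0 : t = 0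
      · rwa [if_pos ht0] at m1
      · rw [if_neg ht0] at m1
        have h3 := U.sub_mem m1 m2
        rw [add_sub_add_left_eq_sub, ← sub_smul] at h3
        exact (U.smul_mem_iff (sub_ne_zero.mpr hts)).mp h3
    have ha := U.sub_mem m2 (U.smul_mem s hb)
    rw [add_sub_cancel_right] at ha
    exact cols_big C k h U hr h0 ha hb
  by_cases hs0 : s = 0
  · exact main s t (Ne.symm hts) (fun ht0 => hts (ht0.trans hs0.symm)) m2 m1
  · exact main t s hts hs0 m1 m2

lemma hop_exists (C : Cosets F n) (k : ℕ) (h : k + 1 < n) (v : Fin n → F)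
    (hv : v ∈ VC C (k + 2)) (hv' : v ∉ VC C (k + 1)) :
    ∃ t, v ∈ VC (hop C k h t) (k + 1) := by
  rw [VC_succ C (k + 1) h, VC_succ C k (by omega)] at hv
  obtain ⟨w, hw, c, hc, rfl⟩ := Submodule.mem_sup.mp hv
  obtain ⟨u, hu, d, hd, rfl⟩ := Submodule.mem_sup.mp hw
  obtain ⟨b, rfl⟩ := Submodule.mem_span_singleton.mp hc
  obtain ⟨a, rfl⟩ := Submodule.mem_span_singleton.mp hd
  by_cases ha : a = 0
  · refine ⟨0, ?_⟩
    rw [(hop_spec C k h 0).2]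
    refine Submodule.add_mem _ ((le_sup_left : VC C k ≤ _) ?_)
      ((le_sup_right : Submodule.span F {ncol C k h 0} ≤ _) ?_)
    · simpa [ha] using hu
    · exact Submodule.mem_span_singleton.mpr ⟨b, by simp [ncol]⟩
  · have hb : b ≠ 0 := by
      rintro rfl
      apply hv'
      rw [VC_succ C k (by omega)]
      simpa using hw
    refine ⟨b / a, ?_⟩
    rw [(hop_spec C k h _).2, add_assoc]
    refine Submodule.add_mem _ ((le_sup_left : VC C k ≤ _) hu)
      ((le_sup_right : Submodule.span F {ncol C k h _} ≤ _) ?_)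
    refine Submodule.mem_span_singleton.mpr ⟨a, ?_⟩
    rw [ncol, if_neg (div_ne_zero hb ha), smul_add, smul_smul, mul_div_cancel₀ _ ha]

lemma hop_conv (C : Cosets F n) (k : ℕ) (h : k + 1 < n) (t : F) (v : Fin n → F)
    (hv : v ∈ VC (hop C k h t) (k + 1)) (hvk : v ∉ VC C k) :
    v ∈ VC C (k + 2) ∧ v ∉ VC C (k + 1) := by
  constructor
  · rw [← (hop_spec C k h t).1 (k + 2) (by omega)]
    exact VC_mono _ (by omega) hv
  · intro hv1
    have e1 := hop_sup C k h t v hv hvk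
    have e2 : VC C (k + 1) = VC C k ⊔ Submodule.span F {v} :=
      eq_sup_span k (finrank_VC C k (by omega)) (finrank_VC _ (k + 1) (by omega))
        (VC_mono _ (Nat.le_succ k)) hv1 hvk
    have m := ncol_mem C k h t
    rw [e1, ← e2] at m
    have ha := col_mem C k (by omega)
    refine cols_big C k h _ (finrank_VC C (k + 1) (by omega)) (VC_mono _ (Nat.le_succ k)) ha ?_
    unfold ncol at m
    split_ifs at m with ht
    · exact m
    · have := Submodule.sub_mem _ m ha
      rw [add_sub_cancel_left] at this
      exact (Submodule.smul_mem_iff _ ht).mp this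

/-- `D` is the result of moving `v` to the front of `C`. -/
def IsAct (v : Fin n → F) (C D : Cosets F n) : Prop :=
  fset D = insert ⊥ ((fun W => Submodule.span F {v} ⊔ W) '' fset C)

lemma sup_of_mem {W : Submodule F (Fin n → F)} {v : Fin n → F} (h : v ∈ W) :
    Submodule.span F {v} ⊔ W = W :=
  sup_eq_right.mpr ((Submodule.span_singleton_le_iff_mem _ _).mpr h)

lemma VC_one (C : Cosets F n) (v : Fin n → F) (hv : v ∈ VC C 1) (hv0 : v ≠ 0) :
    VC C 1 = Submodule.span F {v} := by
  have hn : 0 < n := by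
    rcases Nat.eq_zero_or_pos n with rfl | h
    · exact absurd (Subsingleton.elim v 0) hv0
    · exact h
  have := eq_sup_span (v := v) 0 (finrank_VC C 0 (by omega)) (finrank_VC C 1 (by omega))
    (VC_mono C (Nat.zero_le 1)) hv (by rw [VC_zero]; simpa using hv0)
  rwa [VC_zero, bot_sup_eq] at this

lemma isAct_self (v : Fin n → F) (C : Cosets F n) (hv : v ∈ VC C 1) : IsAct v C C := by
  unfold IsAct
  apply Set.Subset.antisymm
  · rintro _ ⟨i, rfl⟩
    rcases Nat.eq_zero_or_pos i with rfl | hi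
    · left; exact VC_zero C
    · right; exact ⟨VC C i, ⟨i, rfl⟩, sup_of_mem (VC_mono C hi hv)⟩
  · rintro _ (rfl | ⟨_, ⟨i, rfl⟩, rfl⟩)
    · exact bot_mem C
    · rcases Nat.eq_zero_or_pos i with rfl | hi
      · by_cases hv0 : v = 0
        · subst hv0; simp only [Submodule.span_zero_singleton, bot_sup_eq]; exact ⟨0, rfl⟩
        · refine ⟨1, ?_⟩
          simp only [VC_zero, sup_bot_eq]
          exact VC_one C v hv hv0
      · exact ⟨i, (sup_of_mem (VC_mono C hi hv)).symm⟩

lemma isAct_hop (v : Fin n → F) (C D : Cosets F n) (k : ℕ) (h : k + 1 < n) (t : F)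
    (hv : v ∈ VC (hop C k h t) (k + 1)) (hvk : v ∉ VC C k) (hA : IsAct v (hop C k h t) D) :
    IsAct v C D := by
  obtain ⟨h2, h1⟩ := hop_conv C k h t v hv hvk
  unfold IsAct at *
  rw [hA]
  congr 1
  have e1 : Submodule.span F {v} ⊔ VC C (k + 1) = VC C (k + 2) := by
    rw [sup_comm]
    exact (eq_sup_span (k + 1) (finrank_VC C (k + 1) (by omega)) (finrank_VC C (k + 2) (by omega))
      (VC_mono C (Nat.le_succ _)) h2 h1).symm
  have e2 := hop_sup C k h t v hv hvk
  apply Set.Subset.antisymm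
  · rintro _ ⟨_, ⟨i, rfl⟩, rfl⟩
    by_cases hi : i = k + 1
    · subst hi
      refine ⟨VC C k, ⟨k, rfl⟩, ?_⟩
      simp only [sup_of_mem hv]
      rw [e2, sup_comm]
    · exact ⟨VC C i, ⟨i, rfl⟩, by simp only [(hop_spec C k h t).1 i hi]⟩
  · rintro _ ⟨_, ⟨i, rfl⟩, rfl⟩
    by_cases hi : i = k + 1
    · subst hi
      refine ⟨VC (hop C k h t) (k + 2), ⟨k + 2, rfl⟩, ?_⟩
      simp only [(hop_spec C k h t).1 (k + 2) (by omega), e1, sup_of_mem h2]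
    · exact ⟨VC (hop C k h t) i, ⟨i, rfl⟩, by simp only [(hop_spec C k h t).1 i hi]⟩

lemma isAct_exists_aux (v : Fin n → F) (k : ℕ) : ∀ (C : Cosets F n), k < n →
    v ∈ VC C (k + 1) → ∃ D, IsAct v C D := by
  induction k with
  | zero => intro C _ hv; exact ⟨C, isAct_self v C hv⟩
  | succ k ih =>
    intro C hk hv
    by_cases h1 : v ∈ VC C (k + 1)
    · exact ih C (by omega) h1
    · obtain ⟨t, ht⟩ := hop_exists C k hk v hv h1
      obtain ⟨D, hD⟩ := ih (hop C k hk t) (by omega) ht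
      exact ⟨D, isAct_hop v C D k hk t ht (fun h => h1 (VC_mono C (Nat.le_succ k) h)) hD⟩

lemma isAct_exists (v : Fin n → F) (C : Cosets F n) : ∃ D, IsAct v C D := by
  rcases Nat.eq_zero_or_pos n with hn | hn
  · subst hn
    refine ⟨C, isAct_self v C ?_⟩
    rw [Subsingleton.elim v 0]; exact Submodule.zero_mem _
  · refine isAct_exists_aux v (n - 1) C (by omega) ?_
    rw [show n - 1 + 1 = n by omega, VC_n]; trivial

/-- Move `v` to the front. -/
def phi (v : Fin n → F) (C : Cosets F n) : Cosets F n := (isAct_exists v C).choose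

lemma phi_spec (v : Fin n → F) (C : Cosets F n) :
    fset (phi v C) = insert ⊥ ((fun W => Submodule.span F {v} ⊔ W) '' fset C) :=
  (isAct_exists v C).choose_spec

lemma phi_eq (v : Fin n → F) (C D : Cosets F n) (h : IsAct v C D) : phi v C = D :=
  fset_inj _ _ ((phi_spec v C).trans h.symm)

lemma phi_self (v : Fin n → F) (C : Cosets F n) (h : v ∈ VC C 1) : phi v C = C :=
  phi_eq _ _ _ (isAct_self v C h)

lemma phi_hop (v : Fin n → F) (C : Cosets F n) (k : ℕ) (h : k + 1 < n) (t : F)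
    (hv : v ∈ VC (hop C k h t) (k + 1)) (hvk : v ∉ VC C k) :
    phi v (hop C k h t) = phi v C :=
  (phi_eq _ _ _ (isAct_hop v C _ k h t hv hvk (phi_spec _ _))).symm

lemma phi_first (v : Fin n → F) (C : Cosets F n) (hv0 : v ≠ 0) :
    VC (phi v C) 1 = Submodule.span F {v} := by
  have h : Submodule.span F {v} ∈ fset (phi v C) := by
    rw [phi_spec]
    right
    exact ⟨⊥, bot_mem C, by simp⟩
  have := eq_VC_of_mem _ _ h
  rw [finrank_span_singleton hv0] at this
  exact this.symm

end PartE

section PartG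
variable {F : Type} [Field F] [Fintype F] [DecidableEq F] {n : ℕ}

lemma card_VC_diff_one (C : Cosets F n) (hn : 0 < n) :
    (Finset.univ.filter fun v : Fin n → F => v ∈ VC C 1 ∧ v ≠ 0).card = Fintype.card F - 1 := by
  have h := card_sub (VC C 1)
  rw [finrank_VC C 1 hn, pow_one] at h
  have : (Finset.univ.filter fun v : Fin n → F => v ∈ VC C 1 ∧ v ≠ 0)
      = (Finset.univ.filter fun v : Fin n → F => v ∈ VC C 1).erase 0 := by
    ext v; simp [and_comm]
  rw [this, Finset.card_erase_of_mem (by simp), h]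

lemma hop_count (C : Cosets F n) (k : ℕ) (h : k + 1 < n) (v : Fin n → F) (D : Cosets F n) :
    (∑ t : F, if (v ∈ VC (hop C k h t) (k + 1) ∧ v ∉ VC (hop C k h t) k ∧
      phi v (hop C k h t) = D) then (1 : ℂ) else 0)
    = if (v ∈ VC C (k + 2) ∧ v ∉ VC C (k + 1) ∧ phi v C = D) then (1 : ℂ) else 0 := by
  have hk : ∀ t, VC (hop C k h t) k = VC C k := fun t => (hop_spec C k h t).1 k (by omega)
  simp only [hk]
  by_cases hv : v ∈ VC C (k + 2) ∧ v ∉ VC C (k + 1)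
  · obtain ⟨h2, h1⟩ := hv
    have h0 : v ∉ VC C k := fun h => h1 (VC_mono C (Nat.le_succ k) h)
    obtain ⟨t, ht⟩ := hop_exists C k h v h2 h1
    rw [Finset.sum_eq_single t]
    · simp [ht, h0, h1, h2, phi_hop v C k h t ht h0]
    · intro s _ hs
      rw [if_neg]
      rintro ⟨hs', _, _⟩
      exact hs (hop_unique C k h s t v h0 hs' ht)
    · simp
  · rw [if_neg (fun hh => hv ⟨hh.1, hh.2.1⟩)]
    apply Finset.sum_eq_zero
    intro t _
    rw [if_neg]
    rintro ⟨h1, h2, _⟩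
    exact hv (hop_conv C k h t v h1 h2)

lemma prodGen_eq (k : ℕ) : ∀ (C D : Cosets F n), k < n →
    ((Fintype.card F : ℂ) - 1) * prodGenGB F n ℂ k C D =
    ∑ v : Fin n → F, if (v ∈ VC C (k + 1) ∧ v ∉ VC C k ∧ phi v C = D) then (1 : ℂ) else 0 := by
  induction k with
  | zero =>
    intro C D hn
    have h1 : ∀ v : Fin n → F, (v ∈ VC C (0 + 1) ∧ v ∉ VC C 0 ∧ phi v C = D) ↔
        ((v ∈ VC C 1 ∧ v ≠ 0) ∧ C = D) := by
      intro v
      rw [VC_zero, Submodule.mem_bot]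
      constructor
      · rintro ⟨a, b, c⟩; exact ⟨⟨a, b⟩, by rw [← c, phi_self v C a]⟩
      · rintro ⟨⟨a, b⟩, c⟩; exact ⟨a, b, by rw [phi_self v C a, c]⟩
    simp only [h1]
    by_cases hCD : C = D
    · subst hCD
      simp only [and_true, prodGenGB, Matrix.one_apply_eq, mul_one]
      rw [← Finset.sum_filter, Finset.sum_const, nsmul_eq_mul, mul_one, card_VC_diff_one C hn,
        Nat.cast_sub Fintype.card_pos, Nat.cast_one]
    · simp [hCD, prodGenGB]
  | succ k ih =>
    intro C D hk
    have h1 : prodGenGB F n ℂ (k + 1) C D = ∑ t : F, prodGenGB F n ℂ k (hop C k hk t) D := by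
      rw [prodGenGB, Matrix.mul_apply]
      simp only [genGB_eq k hk, Finset.sum_mul]
      rw [Finset.sum_comm]
      refine Finset.sum_congr rfl fun t _ => ?_
      rw [Finset.sum_eq_single (hop C k hk t)]
      · simp
      · intro b _ hb; simp [hb.symm]
      · simp
    rw [h1, Finset.mul_sum]
    rw [Finset.sum_congr rfl fun t _ => ih (hop C k hk t) D (by omega)]
    rw [Finset.sum_comm]
    exact Finset.sum_congr rfl fun v _ => hop_count C k hk v D

lemma sum_prodGen (C D : Cosets F n) :
    ((Fintype.card F : ℂ) - 1) * (∑ k ∈ Finset.range n, prodGenGB F n ℂ k) C D =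
    ∑ v : Fin n → F, if v ≠ 0 ∧ phi v C = D then (1 : ℂ) else 0 := by
  rw [Matrix.sum_apply, Finset.mul_sum,
    Finset.sum_congr rfl fun k hk => prodGen_eq k C D (Finset.mem_range.mp hk), Finset.sum_comm]
  refine Finset.sum_congr rfl fun v _ => ?_
  by_cases hD : phi v C = D
  · have h1 : ∀ k, (if (v ∈ VC C (k + 1) ∧ v ∉ VC C k ∧ phi v C = D) then (1 : ℂ) else 0)
      = (if v ∈ VC C (k + 1) then (1 : ℂ) else 0) - (if v ∈ VC C k then (1 : ℂ) else 0) := by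
      intro k
      by_cases h1 : v ∈ VC C k
      · have h2 := VC_mono C (Nat.le_succ k) h1
        simp [h1, h2]
      · simp [h1, hD]
    simp only [h1]
    rw [Finset.sum_range_sub (fun k => if v ∈ VC C k then (1 : ℂ) else 0)]
    rw [VC_n, VC_zero]
    by_cases hv : v = 0 <;> simp [hv, hD]
  · simp [hD]

lemma X_weight (x : Fin n → ℝ) (v : Fin n → F) (D : Cosets F n) (hv0 : v ≠ 0)
    (hv : v ∈ VC D 1) :
    XGB F n ℂ (fun i => (x i : ℂ)) D D = ((Fintype.card F : ℂ) - 1) * (wt x v : ℂ) := by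
  have hn : 0 < n := by
    rcases Nat.eq_zero_or_pos n with rfl | h
    · exact absurd (Subsingleton.elim v 0) hv0
    · exact h
  have hv' : v ∈ Submodule.span F {col D.out ⟨0, hn⟩} := by
    have := VC_succ D 0 hn
    rw [VC_zero, bot_sup_eq] at this
    rw [← this]; exact hv
  obtain ⟨a, ha⟩ := Submodule.mem_span_singleton.mp hv'
  have ha0 : a ≠ 0 := by rintro rfl; apply hv0; rw [← ha, zero_smul]
  have hne : ∀ i : Fin n, v i ≠ 0 ↔ col D.out ⟨0, hn⟩ i ≠ 0 := by
    intro i; rw [← ha]; simp [ha0]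
  set P : Set ℕ := {i : ℕ | ∃ h : i < n,
    ((D.out : GLn F n) : Matrix (Fin n) (Fin n) F) ⟨i, h⟩
      ⟨0, Nat.lt_of_le_of_lt (Nat.zero_le i) h⟩ ≠ 0} with hP
  have hPv : ∀ i : ℕ, i ∈ P ↔ ∃ h : i < n, v ⟨i, h⟩ ≠ 0 := by
    intro i
    constructor
    · rintro ⟨h, h'⟩; exact ⟨h, (hne ⟨i, h⟩).mpr h'⟩
    · rintro ⟨h, h'⟩; exact ⟨h, (hne ⟨i, h⟩).mp h'⟩
  have hPne : P.Nonempty := by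
    obtain ⟨i, hi⟩ := Function.ne_iff.mp hv0
    exact ⟨i, (hPv i).mpr ⟨i.2, hi⟩⟩
  have hmem : pivotRow F n D ∈ P := Nat.sInf_mem hPne
  have hmin : ∀ j ∈ P, pivotRow F n D ≤ j := fun j hj => Nat.sInf_le hj
  obtain ⟨hp, hpv⟩ := (hPv _).mp hmem
  have hw : wt x v = x ⟨pivotRow F n D, hp⟩ / (Fintype.card F : ℝ) ^ (n - 1 - pivotRow F n D) /
      ((Fintype.card F : ℝ) - 1) := by
    unfold wt
    rw [Finset.sum_eq_single (⟨pivotRow F n D, hp⟩ : Fin n)]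
    · rw [if_pos]
      refine ⟨hpv, fun j hj => ?_⟩
      by_contra hc
      have := hmin j ((hPv j).mpr ⟨j.2, hc⟩)
      have h2 : (j : ℕ) < pivotRow F n D := hj
      omega
    · intro i _ hi
      rw [if_neg]
      rintro ⟨h1, h2⟩
      have h3 := hmin i ((hPv i).mpr ⟨i.2, h1⟩)
      have h4 : (⟨pivotRow F n D, hp⟩ : Fin n) < i := by
        refine lt_of_le_of_ne h3 (Ne.symm hi)
      exact hpv (h2 _ h4)
    · simp
  have hq : (Fintype.card F : ℂ) - 1 ≠ 0 := by
    have h1 : 1 < Fintype.card F := Fintype.one_lt_card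
    intro h
    have : (Fintype.card F : ℂ) = 1 := by linear_combination h
    have : Fintype.card F = 1 := by exact_mod_cast this
    omega
  rw [hw]
  unfold XGB
  rw [if_pos rfl, dif_pos hp]
  push_cast
  field_simp

lemma wt_zero (x : Fin n → ℝ) : wt x (0 : Fin n → F) = 0 := by simp [wt]

lemma TGB_apply (x : Fin n → ℝ) (C D : Cosets F n) :
    TGB F n ℂ (fun i => (x i : ℂ)) C D =
      ∑ v : Fin n → F, (wt x v : ℂ) * (if phi v C = D then 1 else 0) := by
  have hq : (Fintype.card F : ℂ) - 1 ≠ 0 := by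
    have h1 : 1 < Fintype.card F := Fintype.one_lt_card
    intro h
    have : (Fintype.card F : ℂ) = 1 := by linear_combination h
    have : Fintype.card F = 1 := by exact_mod_cast this
    omega
  unfold TGB
  rw [Matrix.mul_apply, Finset.sum_eq_single D]
  · apply mul_left_cancel₀ hq
    rw [← mul_assoc, sum_prodGen, Finset.sum_mul, Finset.mul_sum]
    refine Finset.sum_congr rfl fun v _ => ?_
    by_cases hv : v = 0
    · subst hv; simp [wt_zero]
    · by_cases hD : phi v C = D
      · have hm : v ∈ VC D 1 := by
          rw [← hD, phi_first v C hv]; exact Submodule.mem_span_singleton_self v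
        rw [X_weight x v D hv hm]
        simp [hv, hD]
      · simp [hD]
  · intro E _ hE
    unfold XGB
    rw [if_neg (Ne.symm hE), mul_zero]
  · simp

end PartG

section PartH
variable {F : Type} [Field F] [Fintype F] [DecidableEq F] {n : ℕ}

/-- Apply a list of moves. -/
def phiL (l : List (Fin n → F)) (C : Cosets F n) : Cosets F n := l.foldr phi C

/-- The span of a list. -/
def spanL (l : List (Fin n → F)) : Submodule F (Fin n → F) := Submodule.span F {v | v ∈ l}

lemma phiL_nil (C : Cosets F n) : phiL [] C = C := rfl

lemma phiL_cons (v : Fin n → F) (l : List (Fin n → F)) (C : Cosets F n) :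
    phiL (v :: l) C = phi v (phiL l C) := rfl

lemma phiL_append (l : List (Fin n → F)) (v : Fin n → F) (C : Cosets F n) :
    phiL (l ++ [v]) C = phiL l (phi v C) := by simp [phiL]

lemma spanL_nil : spanL ([] : List (Fin n → F)) = ⊥ := by simp [spanL]

lemma spanL_cons (v : Fin n → F) (l : List (Fin n → F)) :
    spanL (v :: l) = Submodule.span F {v} ⊔ spanL l := by
  unfold spanL
  rw [← Submodule.span_union]
  congr 1
  ext w; simp

lemma spanL_append (l : List (Fin n → F)) (v : Fin n → F) :
    spanL (l ++ [v]) = spanL l ⊔ Submodule.span F {v} := by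
  unfold spanL
  rw [← Submodule.span_union]
  congr 1
  ext w; simp [or_comm]

lemma phiL_spec (l : List (Fin n → F)) : ∃ K : Set (Submodule F (Fin n → F)),
    (∀ W ∈ K, W ≤ spanL l) ∧
    ∀ C, fset (phiL l C) = K ∪ (fun W => spanL l ⊔ W) '' fset C := by
  induction l with
  | nil =>
    refine ⟨∅, by simp, fun C => ?_⟩
    simp [spanL_nil, phiL_nil]
  | cons v l ih =>
    obtain ⟨K, hK, h⟩ := ih
    refine ⟨insert ⊥ ((fun W => Submodule.span F {v} ⊔ W) '' K), ?_, fun C => ?_⟩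
    · rintro _ (rfl | ⟨W, hW, rfl⟩)
      · exact bot_le
      · rw [spanL_cons]; exact sup_le_sup_left (hK W hW) _
    · rw [phiL_cons, phi_spec, h, Set.image_union, Set.insert_union, Set.image_image, spanL_cons]
      simp only [sup_assoc]

lemma phiL_absorb (l : List (Fin n → F)) (v : Fin n → F) (hv : v ∈ spanL l) (C : Cosets F n) :
    phiL l (phi v C) = phiL l C := by
  obtain ⟨K, hK, h⟩ := phiL_spec l
  apply fset_inj
  rw [h, h, phi_spec]
  congr 1
  have hs : spanL l ⊔ Submodule.span F {v} = spanL l :=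
    sup_eq_left.mpr ((Submodule.span_singleton_le_iff_mem _ _).mpr hv)
  rw [Set.image_insert_eq, Set.image_image]
  simp only [← sup_assoc, hs]
  apply Set.insert_eq_of_mem
  exact ⟨⊥, bot_mem C, rfl⟩

lemma phiL_absorbL (l l' : List (Fin n → F)) (h : ∀ v ∈ l', v ∈ spanL l) (C : Cosets F n) :
    phiL l (phiL l' C) = phiL l C := by
  induction l' with
  | nil => rfl
  | cons v l' ih =>
    rw [phiL_cons, phiL_absorb l v (h v (by simp)), ih fun w hw => h w (by simp [hw])]

lemma phiL_idem (l : List (Fin n → F)) (C : Cosets F n) : phiL l (phiL l C) = phiL l C :=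
  phiL_absorbL l l (fun v hv => Submodule.subset_span hv) C

lemma finrank_sup_span (X : Submodule F (Fin n → F)) (v : Fin n → F) (hv : v ∉ X) :
    Module.finrank F ↥(X ⊔ Submodule.span F {v}) = Module.finrank F X + 1 := by
  have hlt : X < X ⊔ Submodule.span F {v} := by
    refine lt_of_le_of_ne le_sup_left fun h => hv ?_
    rw [h]
    exact (le_sup_right : Submodule.span F {v} ≤ _) (Submodule.mem_span_singleton_self v)
  have h1 := Submodule.finrank_lt_finrank_of_lt hlt
  have h2 := Submodule.finrank_add_le_finrank_add_finrank X (Submodule.span F {v})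
  have h3 : Module.finrank F (Submodule.span F {v}) ≤ 1 := by
    have := finrank_span_le_card (R := F) ({v} : Set (Fin n → F))
    simpa using this
  omega

lemma fixed_mem (l : List (Fin n → F)) (C : Cosets F n) (h : phiL l C = C) :
    spanL l = VC C (Module.finrank F (spanL l)) := by
  apply eq_VC_of_mem
  obtain ⟨K, hK, hs⟩ := phiL_spec l
  rw [← h, hs]
  right
  exact ⟨⊥, bot_mem C, by simp⟩

lemma fixed_append (l : List (Fin n → F)) (v : Fin n → F) (hv : v ∉ spanL l) (C : Cosets F n) :
    phiL (l ++ [v]) C = C ↔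
      (phiL l C = C ∧ v ∈ VC C (Module.finrank F (spanL l) + 1)) := by
  have hr := finrank_sup_span _ v hv
  have hvm : v ∈ spanL l ⊔ Submodule.span F {v} :=
    (le_sup_right : Submodule.span F {v} ≤ _) (Submodule.mem_span_singleton_self v)
  constructor
  · intro h
    have h1 := fixed_mem _ C h
    rw [spanL_append, hr] at h1
    refine ⟨?_, by rw [← h1]; exact hvm⟩
    rw [phiL_append] at h
    conv_lhs => rw [← h]
    rw [phiL_idem, h]
  · rintro ⟨h1, h2⟩
    have hX := fixed_mem l C h1
    set k := Module.finrank F (spanL l) with hk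
    have hkn : k + 1 ≤ n := by
      have := Submodule.finrank_le (spanL l ⊔ Submodule.span F {v})
      rw [hr] at this
      simpa using this
    have hX1 : VC C (k + 1) = spanL l ⊔ Submodule.span F {v} :=
      eq_sup_span k hk.symm (finrank_VC C (k + 1) hkn)
        (by rw [hX]; exact VC_mono C (Nat.le_succ k)) h2 hv
    obtain ⟨K, hK, hs⟩ := phiL_spec l
    rw [phiL_append]
    conv_rhs => rw [← h1]
    apply fset_inj
    rw [hs, hs, phi_spec]
    congr 1
    rw [Set.image_insert_eq, Set.image_image]
    simp only [← sup_assoc, ← hX1]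
    rw [hX]
    apply Set.Subset.antisymm
    · rintro _ (rfl | ⟨_, ⟨i, rfl⟩, rfl⟩)
      · exact ⟨⊥, bot_mem C, rfl⟩
      · rcases le_total i (k + 1) with hi | hi
        · refine ⟨VC C (k + 1), ⟨_, rfl⟩, ?_⟩
          simp only
          rw [sup_eq_right.mpr (VC_mono C (Nat.le_succ k)), sup_eq_left.mpr (VC_mono C hi)]
        · refine ⟨VC C i, ⟨_, rfl⟩, ?_⟩
          simp only
          rw [sup_eq_right.mpr (VC_mono C hi), sup_eq_right.mpr (VC_mono C (by omega))]
    · rintro _ ⟨_, ⟨i, rfl⟩, rfl⟩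
      rcases Nat.lt_or_ge k i with hi | hi
      · right
        refine ⟨VC C i, ⟨_, rfl⟩, ?_⟩
        simp only
        rw [sup_eq_right.mpr (VC_mono C hi), sup_eq_right.mpr (VC_mono C (le_of_lt hi))]
      · left
        simp only
        rw [sup_bot_eq, sup_eq_left.mpr (VC_mono C hi)]

/-- Number of fixed flags. -/
def NL (l : List (Fin n → F)) : ℤ := ∑ C : Cosets F n, if phiL l C = C then 1 else 0

lemma card_diff (X : Submodule F (Fin n → F)) (Y : Submodule F (Fin n → F)) (h : X ≤ Y) :
    (∑ v : Fin n → F, if v ∉ X ∧ v ∈ Y then (1 : ℤ) else 0)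
      = (Fintype.card F : ℤ) ^ Module.finrank F Y - (Fintype.card F : ℤ) ^ Module.finrank F X := by
  have h1 := card_sub X
  have h2 := card_sub Y
  rw [Finset.card_filter] at h1 h2
  have h1' : (∑ v : Fin n → F, if v ∈ X then (1 : ℤ) else 0) =
    (Fintype.card F : ℤ) ^ Module.finrank F X := by exact_mod_cast h1
  have h2' : (∑ v : Fin n → F, if v ∈ Y then (1 : ℤ) else 0) =
    (Fintype.card F : ℤ) ^ Module.finrank F Y := by exact_mod_cast h2
  rw [← h1', ← h2', ← Finset.sum_sub_distrib]
  refine Finset.sum_congr rfl fun v _ => ?_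
  by_cases hx : v ∈ X
  · simp [hx, h hx]
  · simp [hx]

lemma NL_double (l : List (Fin n → F)) (hk : Module.finrank F (spanL l) + 1 ≤ n) :
    (∑ v : Fin n → F, if v ∉ spanL l then NL (l ++ [v]) else 0) =
    ((Fintype.card F : ℤ) ^ (Module.finrank F (spanL l) + 1) -
      (Fintype.card F : ℤ) ^ Module.finrank F (spanL l)) * NL l := by
  have h1 : ∀ v : Fin n → F, (if v ∉ spanL l then NL (l ++ [v]) else 0) =
      ∑ C : Cosets F n, if phiL l C = C then
        (if v ∉ spanL l ∧ v ∈ VC C (Module.finrank F (spanL l) + 1) then (1 : ℤ) else 0) else 0 := by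
    intro v
    by_cases hv : v ∈ spanL l
    · simp [hv]
    · rw [if_pos hv, NL]
      refine Finset.sum_congr rfl fun C _ => ?_
      simp only [fixed_append l v hv C]
      by_cases hC : phiL l C = C <;> simp [hC, hv]
  rw [Finset.sum_congr rfl fun v _ => h1 v, Finset.sum_comm, NL, Finset.mul_sum]
  refine Finset.sum_congr rfl fun C _ => ?_
  by_cases hC : phiL l C = C
  · simp only [hC, if_true, mul_one]
    rw [card_diff]
    · rw [finrank_VC C _ hk]
    · conv_lhs => rw [fixed_mem l C hC]
      exact VC_mono C (Nat.le_succ _)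
  · simp [hC]

lemma NL_eq (m : ℕ) : ∀ l : List (Fin n → F), n - Module.finrank F (spanL l) = m →
    NL l = Bq (Fintype.card F) m (qDerangeNum (Fintype.card F)) := by
  induction m with
  | zero =>
    intro l hl
    have hle : Module.finrank F (spanL l) ≤ n := by
      have := Submodule.finrank_le (spanL l); simpa using this
    have htop : spanL l = ⊤ := by
      apply Submodule.eq_top_of_finrank_eq
      simp; omega
    obtain ⟨K, hK, hs⟩ := phiL_spec l
    have hconst : ∀ C D : Cosets F n, phiL l C = phiL l D := by
      intro C D
      apply fset_inj
      rw [hs, hs, htop]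
      congr 1
      apply Set.Subset.antisymm
      · rintro _ ⟨W, _, rfl⟩; exact ⟨⊥, bot_mem D, by simp⟩
      · rintro _ ⟨W, _, rfl⟩; exact ⟨⊥, bot_mem C, by simp⟩
    have hb : Bq (Fintype.card F) 0 (qDerangeNum (Fintype.card F)) = 1 := by
      simp [Bq, qD_zero]
    rw [hb, NL]
    set C0 : Cosets F n := phiL l (QuotientGroup.mk 1)
    rw [Finset.sum_eq_single C0]
    · rw [if_pos (phiL_idem l _)]
    · intro C _ hC
      rw [if_neg]
      intro h
      exact hC (by rw [← h]; exact hconst _ _)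
    · simp
  | succ m ih =>
    intro l hl
    set k := Module.finrank F (spanL l) with hk
    have h1 := NL_double l (by omega)
    rw [← hk] at h1
    have h2 : (∑ v : Fin n → F, if v ∉ spanL l then NL (l ++ [v]) else 0) =
        ((Fintype.card F : ℤ) ^ n - (Fintype.card F : ℤ) ^ k) *
          Bq (Fintype.card F) m (qDerangeNum (Fintype.card F)) := by
      have h3 := card_diff (spanL l) ⊤ le_top
      rw [finrank_top, Module.finrank_fin_fun, ← hk] at h3
      rw [← h3, Finset.sum_mul]
      refine Finset.sum_congr rfl fun v _ => ?_
      by_cases hv : v ∈ spanL l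
      · simp [hv]
      · rw [if_pos hv, ih (l ++ [v]) (by rw [spanL_append, finrank_sup_span _ v hv]; omega)]
        simp [hv]
    have hpn : (Fintype.card F : ℤ) ^ n = (Fintype.card F : ℤ) ^ (k + (m + 1)) := by
      congr 1; omega
    rw [h2, hpn] at h1
    have hq := qn_mul (Fintype.card F) (m + 1)
    have hc : 1 < Fintype.card F := Fintype.one_lt_card
    have hc' : (1 : ℤ) < Fintype.card F := by exact_mod_cast hc
    have hne : (Fintype.card F : ℤ) ^ k * ((Fintype.card F : ℤ) - 1) ≠ 0 :=
      mul_ne_zero (pow_ne_zero _ (by omega)) (by omega)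
    rw [Bq_derange]
    apply mul_left_cancel₀ hne
    linear_combination -h1 - (Fintype.card F : ℤ) ^ k *
      Bq (Fintype.card F) m (qDerangeNum (Fintype.card F)) * hq

end PartH

section PartI
open Polynomial
variable {F : Type} [Field F] [Fintype F] [DecidableEq F] {n : ℕ}

/-- The matrix of a list of moves. -/
def ML (l : List (Fin n → F)) : Matrix (Cosets F n) (Cosets F n) ℂ :=
  fun C D => if phiL l C = D then 1 else 0

lemma ML_nil : ML ([] : List (Fin n → F)) = 1 := by
  ext C D
  rw [Matrix.one_apply]
  by_cases h : C = D
  · rw [if_pos h]; exact if_pos h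
  · rw [if_neg h]; exact if_neg h

lemma T_mul_ML (x : Fin n → ℝ) (l : List (Fin n → F)) :
    TGB F n ℂ (fun i => (x i : ℂ)) * ML l = ∑ v : Fin n → F, (wt x v : ℂ) • ML (l ++ [v]) := by
  ext C D
  rw [Matrix.mul_apply, Matrix.sum_apply]
  simp only [TGB_apply, Finset.sum_mul, Matrix.smul_apply, smul_eq_mul]
  rw [Finset.sum_comm]
  refine Finset.sum_congr rfl fun v _ => ?_
  rw [Finset.sum_eq_single (phi v C)]
  · simp [ML, phiL_append]
  · intro E _ hE; simp [hE.symm]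
  · simp

lemma ML_absorb (l : List (Fin n → F)) (v : Fin n → F) (hv : v ∈ spanL l) :
    ML (l ++ [v]) = ML l := by
  ext C D
  simp only [ML, phiL_append, phiL_absorb l v hv]

lemma T_sub_mul_ML (x : Fin n → ℝ) (l : List (Fin n → F)) :
    (TGB F n ℂ (fun i => (x i : ℂ)) - algebraMap ℂ _ (lamY x (spanL l) : ℂ)) * ML l
      = ∑ v : Fin n → F, if v ∈ spanL l then 0 else (wt x v : ℂ) • ML (l ++ [v]) := by
  rw [sub_mul, T_mul_ML, ← Algebra.smul_def, lamY]
  push_cast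
  rw [Finset.sum_smul, ← Finset.sum_sub_distrib]
  refine Finset.sum_congr rfl fun v _ => ?_
  by_cases hv : v ∈ spanL l
  · simp [hv, ML_absorb l v hv]
  · simp [hv]

lemma lamY_lt (x : Fin n → ℝ) (hx : ∀ i, 0 ≤ x i) (X : Submodule F (Fin n → F)) (v : Fin n → F)
    (hv : v ∉ X) (hw : wt x v ≠ 0) : lamY x X < lamY x (X ⊔ Submodule.span F {v}) := by
  unfold lamY
  have hvm : v ∈ X ⊔ Submodule.span F {v} :=
    (le_sup_right : Submodule.span F {v} ≤ _) (Submodule.mem_span_singleton_self v)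
  apply Finset.sum_lt_sum
  · intro w _
    by_cases h : w ∈ X
    · rw [if_pos h, if_pos ((le_sup_left : X ≤ _) h)]
    · rw [if_neg h]
      split_ifs
      · exact wt_nonneg x hx w
      · exact le_rfl
  · refine ⟨v, Finset.mem_univ v, ?_⟩
    rw [if_neg hv, if_pos hvm]
    exact lt_of_le_of_ne (wt_nonneg x hx v) hw.symm

/-- The set of eigenvalues. -/
def Lam (x : Fin n → ℝ) (F : Type) [Field F] [Fintype F] : Finset ℝ :=
  Finset.univ.image fun Y : Submodule F (Fin n → F) => lamY x Y

lemma annih (x : Fin n → ℝ) (hx : ∀ i, 0 ≤ x i) (m : ℕ) : ∀ l : List (Fin n → F),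
    n - Module.finrank F (spanL l) < m →
    aeval (TGB F n ℂ (fun i => (x i : ℂ)))
      (∏ a ∈ (Lam x F).filter (fun a => lamY x (spanL l) ≤ a), (X - C (a : ℂ))) * ML l = 0 := by
  induction m with
  | zero => intro l h; omega
  | succ m ih =>
    intro l hl
    set A := (Lam x F).filter (fun a => lamY x (spanL l) ≤ a) with hA
    have hmem : lamY x (spanL l) ∈ A := by
      rw [hA, Finset.mem_filter]
      exact ⟨Finset.mem_image_of_mem _ (Finset.mem_univ _), le_rfl⟩
    rw [← Finset.prod_erase_mul A _ hmem, map_mul, Matrix.mul_assoc]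
    have e1 : aeval (TGB F n ℂ (fun i => (x i : ℂ))) (X - C (lamY x (spanL l) : ℂ))
        = TGB F n ℂ (fun i => (x i : ℂ)) - algebraMap ℂ _ (lamY x (spanL l) : ℂ) := by
      rw [map_sub, aeval_X, aeval_C]
    rw [e1, T_sub_mul_ML, Matrix.mul_sum]
    apply Finset.sum_eq_zero
    intro v _
    by_cases hv : v ∈ spanL l
    · rw [if_pos hv, mul_zero]
    · rw [if_neg hv]
      by_cases hw : wt x v = 0
      · simp [hw]
      · have hlt := lamY_lt x hx (spanL l) v hv hw
        have hfr := finrank_sup_span (spanL l) v hv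
        have hfn : Module.finrank F ↥(spanL l ⊔ Submodule.span F {v}) ≤ n := by
          have := Submodule.finrank_le (spanL l ⊔ Submodule.span F {v})
          simpa using this
        have h1 := ih (l ++ [v]) (by rw [spanL_append, hfr]; omega)
        rw [spanL_append] at h1
        have hsub : (Lam x F).filter (fun a => lamY x (spanL l ⊔ Submodule.span F {v}) ≤ a)
            ⊆ A.erase (lamY x (spanL l)) := by
          intro a ha
          rw [Finset.mem_filter] at ha
          rw [Finset.mem_erase, hA, Finset.mem_filter]
          exact ⟨ne_of_gt (lt_of_lt_of_le hlt ha.2), ha.1, le_of_lt (lt_of_lt_of_le hlt ha.2)⟩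
        rw [← Finset.prod_sdiff hsub, map_mul, Matrix.mul_smul, Matrix.mul_assoc, h1, mul_zero,
          smul_zero]

lemma T_diag (x : Fin n → ℝ) (hx : ∀ i, 0 ≤ x i) :
    ∃ (P : Matrix (Cosets F n) (Cosets F n) ℂ) (d : Cosets F n → ℂ), IsUnit P.det ∧
      TGB F n ℂ (fun i => (x i : ℂ)) = P * Matrix.diagonal d * P⁻¹ := by
  have h := annih x hx (n + 1) ([] : List (Fin n → F)) (by omega)
  rw [ML_nil, mul_one] at h
  apply diag_of_annihilated _ (((Lam x F).filter
    (fun a => lamY x (spanL ([] : List (Fin n → F))) ≤ a)).image (fun a : ℝ => (a : ℂ)))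
  rw [Finset.prod_image]
  · exact h
  · intro a _ b _ hab
    exact Complex.ofReal_injective hab

lemma trace_ML (l : List (Fin n → F)) : Matrix.trace (ML l) =
    ∑ Y : Submodule F (Fin n → F), if spanL l ≤ Y then
      ((qDerangeNum (Fintype.card F) (n - Module.finrank F Y) : ℤ) : ℂ) else 0 := by
  have h1 : Matrix.trace (ML l) = ((NL l : ℤ) : ℂ) := by
    simp [Matrix.trace, ML, NL]
  have h2 := sum_ge_Bq (qDerangeNum (Fintype.card F)) (spanL l)
  rw [Module.finrank_fin_fun] at h2
  rw [h1, NL_eq _ l rfl, ← h2, Finset.sum_filter]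
  push_cast
  rfl

lemma trace_pow (x : Fin n → ℝ) (m : ℕ) : ∀ l : List (Fin n → F),
    Matrix.trace (TGB F n ℂ (fun i => (x i : ℂ)) ^ m * ML l) =
    ∑ Y : Submodule F (Fin n → F), if spanL l ≤ Y then
      ((qDerangeNum (Fintype.card F) (n - Module.finrank F Y) : ℤ) : ℂ) * (lamY x Y : ℂ) ^ m
      else 0 := by
  induction m with
  | zero => intro l; simp only [pow_zero, one_mul, mul_one]; exact trace_ML l
  | succ m ih =>
    intro l
    rw [pow_succ, Matrix.mul_assoc, T_mul_ML, Matrix.mul_sum, Matrix.trace_sum]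
    simp only [Matrix.mul_smul, Matrix.trace_smul, ih, smul_eq_mul, Finset.mul_sum]
    rw [Finset.sum_comm]
    refine Finset.sum_congr rfl fun Y _ => ?_
    by_cases hY : spanL l ≤ Y
    · rw [if_pos hY]
      have e : (lamY x Y : ℂ) = ∑ v, if v ∈ Y then (wt x v : ℂ) else 0 := by
        unfold lamY
        push_cast
        refine Finset.sum_congr rfl fun v _ => ?_
        split_ifs <;> simp
      rw [show (lamY x Y : ℂ) ^ (m + 1) = (lamY x Y : ℂ) ^ m *
        ∑ v, (if v ∈ Y then (wt x v : ℂ) else 0) by rw [← e, pow_succ], ← mul_assoc,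
        Finset.mul_sum]
      refine Finset.sum_congr rfl fun v _ => ?_
      simp only [spanL_append, sup_le_iff, hY, true_and, Submodule.span_singleton_le_iff_mem]
      by_cases hv : v ∈ Y
      · simp only [hv, if_true]; ring
      · simp [hv]
    · rw [if_neg hY]
      apply Finset.sum_eq_zero
      intro v _
      rw [if_neg, mul_zero]
      intro h
      rw [spanL_append] at h
      exact hY (le_trans le_sup_left h)

lemma T_charpoly (x : Fin n → ℝ) (hx : ∀ i, 0 ≤ x i) :
    (TGB F n ℂ (fun i => (x i : ℂ))).charpoly = ∏ Y : Submodule F (Fin n → F),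
      (X - C (lamY x Y : ℂ)) ^ (qDerangeNum (Fintype.card F) (n - Module.finrank F Y)).toNat := by
  obtain ⟨P, d, hP, hT⟩ := T_diag (F := F) x hx
  apply charpoly_of_traces _ P d hP hT
  intro k
  have h := trace_pow x k ([] : List (Fin n → F))
  rw [ML_nil, mul_one] at h
  rw [h]
  refine Finset.sum_congr rfl fun Y _ => ?_
  rw [spanL_nil, if_pos bot_le]
  congr 1
  have := Int.toNat_of_nonneg (qD_nonneg (Fintype.card F) (n - Module.finrank F Y))
  exact_mod_cast congrArg (fun z : ℤ => (z : ℂ)) this.symm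

lemma lambdaS_cast (q : ℕ) (x : Fin n → ℝ) (S : Finset (Fin n)) :
    ((lambdaS ℝ n (q : ℝ) x S : ℝ) : ℂ) = lambdaS ℂ n (q : ℂ) (fun i => (x i : ℂ)) S := by
  unfold lambdaS
  push_cast
  rfl

lemma multGB_univ (q : ℕ) : multGB q n Finset.univ = 1 := by
  have h : ∀ i : Fin n, n - ((i : ℕ) + 1) -
      (((Finset.univ : Finset (Fin n)).filter fun t => i ≤ t).card - 1) = 0 := by
    intro i
    have h1 : ((Finset.univ : Finset (Fin n)).filter fun t => i ≤ t) = Finset.Ici i := by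
      ext t; simp
    rw [h1, Fin.card_Ici]
    omega
  unfold multGB
  rw [Finset.sum_eq_zero fun i _ => h i]
  simp [qD_zero]

lemma T_charpoly' (x : Fin n → ℝ) (hx : ∀ i, 0 ≤ x i) :
    (TGB F n ℂ (fun i => (x i : ℂ))).charpoly = ∏ S : Finset (Fin n),
      (X - C (lambdaS ℂ n (Fintype.card F : ℂ) (fun i => (x i : ℂ)) S)) ^
        multGB (Fintype.card F) n S := by
  rw [T_charpoly x hx]
  have h := prod_piv (F := F) n (fun S =>
    (X - C (lambdaS ℂ n (Fintype.card F : ℂ) (fun i => (x i : ℂ)) S)) ^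
      (qDerangeNum (Fintype.card F) (n - S.card)).toNat)
  simp only [← pow_mul] at h
  rw [show (∏ S : Finset (Fin n),
      (X - C (lambdaS ℂ n (Fintype.card F : ℂ) (fun i => (x i : ℂ)) S)) ^
        multGB (Fintype.card F) n S) = _ from h.symm]
  refine Finset.prod_congr rfl fun Y _ => ?_
  rw [lamY_eq, lambdaS_cast, finrank_eq_card_piv]

end PartI

/-- Let `q` be a prime power (the cardinality of the finite field `F`) and
`x` nonnegative real weights (viewed in `ℂ`).  The characteristic polynomial of the
transition matrix of `T_{G/B}(q,x)` equals
`(t - λ_{[n]}(q,x)) ∏_{S ⊊ [n]} (t - λ_S(q,x))^{m(S)}`, and `T_{G/B}(q,x)` is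
diagonalizable. -/
theorem qTsetlin_flags_charpoly (F : Type) [Field F] [Fintype F] [DecidableEq F]
    (n : ℕ) (x : Fin n → ℝ) (hx : ∀ i, 0 ≤ x i) :
    (Matrix.charpoly (TGB F n ℂ fun i => (x i : ℂ)) =
      (Polynomial.X -
          Polynomial.C (lambdaS ℂ n (Fintype.card F : ℂ) (fun i => (x i : ℂ)) Finset.univ)) *
        ∏ S ∈ Finset.univ.filter fun S : Finset (Fin n) => S ≠ Finset.univ,
          (Polynomial.X -
              Polynomial.C (lambdaS ℂ n (Fintype.card F : ℂ) (fun i => (x i : ℂ)) S)) ^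
            multGB (Fintype.card F) n S) ∧
    (∃ P D : Matrix (Cosets F n) (Cosets F n) ℂ,
      IsUnit P.det ∧ D.IsDiag ∧ TGB F n ℂ (fun i => (x i : ℂ)) = P * D * P⁻¹) := by
  refine ⟨?_, ?_⟩
  · rw [T_charpoly' x hx, ← Finset.mul_prod_erase _ _ (Finset.mem_univ (Finset.univ : Finset (Fin n))),
      multGB_univ, pow_one]
    congr 1
    refine Finset.prod_congr ?_ fun _ _ => rfl
    ext S
    simp
  · obtain ⟨P, d, hP, hT⟩ := T_diag (F := F) x hx
    exact ⟨P, Matrix.diagonal d, hP, Matrix.isDiag_diagonal d, hT⟩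

end QTsetlin
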